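/- arXiv:2503.13201 — 3 statements merged into one kernel-verified Lean document; each statement's English description precedes it below -/
import Mathlib

section
/- There exist a₀ > 0 and C > 0 such that for every a ∈ (0,a₀) there are a real number c(a) and a smooth, doubly 2π-periodic, symmetric function φ_a : ℝ² → ℝ satisfying −Δφ_a + c(a)φ_a = φ_a² on ℝ², such that for all (x,y) ∈ ℝ²: |φ_a(x,y) − [2 + a cos x cos y + (a²/8)(−7/6 + cos 2x + cos 2y + (1/3)cos 2x cos 2y) + (a³/384)(7(cos 3x cos y + cos x cos 3y) + (1/2)cos 3x cos 3y)]| ≤ C a⁴, and moreover |c(a) − (2 − a²/48)| ≤ C a⁴. -/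
/-!
Writing `φ = c + a ψ` turns the standing-wave equation into `-Δψ = c ψ + a ψ²`, which bifurcates
from `ψ = cos x cos y` at `c = 2`. Put `ψ = cos x cos y + v` with `v` free of the mode
`cos x cos y`, and let `κ` be the coefficient of that mode in `ψ²`. Projecting on the mode gives
`c = 2 - a κ`; on the other modes `-Δ - 2` has eigenvalues `m² + n² - 2 ∈ ℤ \ {0}`, hence a bounded
inverse `T`, and the equation becomes `v = a T (ψ² - κ v)`, which the implicit function theorem
solves near `(a, v) = (0, 0)`.

The Banach space consists of the cosine series `∑ c (m, n) cos (m x) cos (n y)` with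
`∑ |c (m, n)| 2 ^ (m + n) < ∞`. Evenness and periodicity are built in, the weight gives smoothness
and termwise differentiation, and by the addition formulas pointwise multiplication is bounded.

Substituting `v = O(a)` into the equation twice gives `v = a V₁ + a² V₂ + O(a³)` with
`V₁ = T (e²)`, `V₂ = 2 T (e V₁)`, where `e = cos x cos y`, and `κ = a / 48 + O(a³)`: the `a²`-term
of `κ` vanishes because `e V₂` and `V₁²` only contain modes `cos (m x) cos (n y)` with `m` and `n`
even.
-/

noncomputable section
open Real MeasureTheory Filter

/-- doubly 2π-periodic -/
def DblPeriodic (u : ℝ → ℝ → ℝ) : Prop :=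
  ∀ x y : ℝ, u (x + 2*π) y = u x y ∧ u x (y + 2*π) = u x y

/-- symmetric: even in each variable separately -/
def SymFun (u : ℝ → ℝ → ℝ) : Prop :=
  ∀ x y : ℝ, u (-x) y = u x y ∧ u x (-y) = u x y

/-- smooth as a function on ℝ² -/
def Smooth2 (u : ℝ → ℝ → ℝ) : Prop :=
  ContDiff ℝ (⊤ : ℕ∞) fun p : ℝ × ℝ => u p.1 p.2

/-- the Laplacian Δu = u_xx + u_yy -/
def lap (u : ℝ → ℝ → ℝ) (x y : ℝ) : ℝ :=
  deriv (fun t => deriv (fun s => u s y) t) x + deriv (fun t => deriv (fun s => u x s) t) y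

open Asymptotics Topology
open scoped lp

/-! ### Bounded linear maps out of `ℓ¹` -/

section LpOne

variable {ι 𝕜 F : Type*} [NormedField 𝕜] [NormedAddCommGroup F] [NormedSpace 𝕜 F]

lemma lpOne_hasSum_norm (u : ℓ¹(ι, 𝕜)) : HasSum (fun i => ‖u i‖) ‖u‖ := by
  simpa using lp.hasSum_norm (p := 1) (by simp) u

lemma lpOne_norm_smul_le {M : ι → F} {K : ℝ} (hM : ∀ i, ‖M i‖ ≤ K) (u : ℓ¹(ι, 𝕜)) (i : ι) :
    ‖u i • M i‖ ≤ K * ‖u i‖ := by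
  rw [norm_smul, mul_comm]
  exact mul_le_mul_of_nonneg_right (hM i) (norm_nonneg _)

lemma lpOne_norm_tsum_smul_le {M : ι → F} {K : ℝ} (hM : ∀ i, ‖M i‖ ≤ K) (u : ℓ¹(ι, 𝕜)) :
    ‖∑' i, u i • M i‖ ≤ K * ‖u‖ :=
  tsum_of_norm_bounded ((lpOne_hasSum_norm u).mul_left K) (lpOne_norm_smul_le hM u)

variable [CompleteSpace F]

lemma lpOne_summable_smul {M : ι → F} (hM : ∃ K, ∀ i, ‖M i‖ ≤ K) (u : ℓ¹(ι, 𝕜)) :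
    Summable fun i => u i • M i :=
  let ⟨K, hK⟩ := hM
  .of_norm_bounded ((lpOne_hasSum_norm u).summable.mul_left K) (lpOne_norm_smul_le hK u)

/-- The universal property of `ℓ¹`: a bounded family `M` in a Banach space extends to a bounded
linear map sending the `i`-th unit vector to `M i`. -/
def lpOneLift (M : ι → F) (hM : ∃ K, ∀ i, ‖M i‖ ≤ K) : ℓ¹(ι, 𝕜) →L[𝕜] F :=
  LinearMap.mkContinuousOfExistsBound
    { toFun u := ∑' i, u i • M i
      map_add' u v := by
        rw [← (lpOne_summable_smul hM u).tsum_add (lpOne_summable_smul hM v)]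
        simp [add_smul]
      map_smul' c u := by
        rw [RingHom.id_apply, ← (lpOne_summable_smul hM u).tsum_const_smul]
        simp [mul_smul] }
    (hM.imp fun _ hK => lpOne_norm_tsum_smul_le hK)

lemma lpOneLift_apply (M : ι → F) (hM : ∃ K, ∀ i, ‖M i‖ ≤ K) (u : ℓ¹(ι, 𝕜)) :
    lpOneLift M hM u = ∑' i, u i • M i := rfl

lemma lpOneLift_single [DecidableEq ι] (M : ι → F) (hM : ∃ K, ∀ i, ‖M i‖ ≤ K) (i : ι) (c : 𝕜) :
    lpOneLift M hM (lp.single 1 i c) = c • M i := by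
  rw [lpOneLift_apply, tsum_eq_single i fun j hj => by simp [hj]]
  simp

end LpOne

/-! ### Trigonometric series -/

section TrigSeries

variable {ι : Type*}

lemma exists_natCast_pow_le_mul_pow (k : ℕ) {r : ℝ} (hr : 1 < r) :
    ∃ K : ℝ, ∀ n : ℕ, (n : ℝ) ^ k ≤ K * r ^ n := by
  have hinv : |r⁻¹| < 1 := by
    rw [abs_of_pos (by positivity)]
    exact inv_lt_one_of_one_lt₀ hr
  obtain ⟨K, hK⟩ := (tendsto_pow_const_mul_const_pow_of_abs_lt_one k hinv).bddAbove_range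
  refine ⟨K, fun n => ?_⟩
  have hn : (n : ℝ) ^ k * r⁻¹ ^ n ≤ K := hK ⟨n, rfl⟩
  rwa [inv_pow, ← div_eq_mul_inv, div_le_iff₀ (by positivity)] at hn

lemma cos_mul_cos_eq_dist (m n : ℕ) (x : ℝ) :
    cos (m * x) * cos (n * x) = (cos ((m + n : ℕ) * x) + cos ((m.dist n : ℕ) * x)) / 2 := by
  have hdist : cos ((m.dist n : ℕ) * x) = cos (m * x - n * x) := by
    rcases le_total m n with h | h
    · rw [Nat.dist_eq_sub_of_le h, Nat.cast_sub h, ← cos_neg]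
      ring_nf
    · rw [Nat.dist_eq_sub_of_le_right h, Nat.cast_sub h]
      ring_nf
  rw [hdist, Nat.cast_add, add_mul]
  linear_combination two_mul_cos_mul_cos (m * x) (n * x) / 2

lemma norm_iteratedFDeriv_cos_comp_le {V : Type*} [NormedAddCommGroup V] [NormedSpace ℝ V]
    (L : V →L[ℝ] ℝ) (k : ℕ) (z : V) :
    ‖iteratedFDeriv ℝ k (fun z => cos (L z)) z‖ ≤ ‖L‖ ^ k := by
  have hcomp := L.iteratedFDeriv_comp_right contDiff_cos z (i := k) (n := (⊤ : ℕ∞))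
    (mod_cast le_top)
  change ‖iteratedFDeriv ℝ k (cos ∘ L) z‖ ≤ _
  calc ‖iteratedFDeriv ℝ k (cos ∘ L) z‖
      ≤ ‖iteratedFDeriv ℝ k cos (L z)‖ * ∏ _i : Fin k, ‖L‖ := by
        rw [hcomp]
        exact ContinuousMultilinearMap.norm_compContinuousLinearMap_le _ _
    _ ≤ 1 * ‖L‖ ^ k := by
        rw [norm_iteratedFDeriv_eq_norm_iteratedDeriv, Finset.prod_const, Finset.card_fin]
        gcongr
        exact abs_iteratedDeriv_cos_le_one _ _
    _ = ‖L‖ ^ k := one_mul _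

lemma contDiff_tsum_mul_cos {V : Type*} [NormedAddCommGroup V] [NormedSpace ℝ V]
    {w : ι → ℝ} {L : ι → V →L[ℝ] ℝ} (hw : ∀ k : ℕ, Summable fun i => w i * ‖L i‖ ^ k) :
    ContDiff ℝ (⊤ : ℕ∞) fun z => ∑' i, w i * cos (L i z) := by
  have hsmooth (i : ι) : ContDiff ℝ (⊤ : ℕ∞) fun z => cos (L i z) := by fun_prop
  refine contDiff_tsum (v := fun k i => |w i * ‖L i‖ ^ k|) (fun i => (hsmooth i).const_smul (w i))
    (fun k _ => (hw k).abs) fun k i z _ => ?_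
  simp only [← smul_eq_mul (w i)]
  rw [iteratedFDeriv_const_smul_apply' ((hsmooth i).of_le (mod_cast le_top)).contDiffAt, norm_smul,
    smul_eq_mul, abs_mul, abs_of_nonneg (a := ‖L i‖ ^ k) (by positivity)]
  exact mul_le_mul_of_nonneg_left (norm_iteratedFDeriv_cos_comp_le _ _ _) (norm_nonneg _)

lemma hasDerivAt_tsum_mul_comp {f f' : ℝ → ℝ} (hf : ∀ t, HasDerivAt f (f' t) t)
    (hf_le : ∀ t, |f t| ≤ 1) (hf'_le : ∀ t, |f' t| ≤ 1) {w k : ι → ℝ} (hw : Summable w)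
    (hwk : Summable fun i => w i * k i) (t : ℝ) :
    HasDerivAt (fun t => ∑' i, w i * f (k i * t)) (∑' i, w i * k i * f' (k i * t)) t := by
  refine hasDerivAt_tsum (g := fun i s => w i * f (k i * s))
    (g' := fun i s => w i * k i * f' (k i * s)) (y₀ := 0) hwk.abs (fun i s => ?_)
    (fun i s => ?_) ?_ t
  · have hscaled := ((hf (k i * s)).comp s ((hasDerivAt_id s).const_mul (k i))).const_mul (w i)
    exact hscaled.congr_deriv (by ring)
  · rw [norm_mul]
    exact mul_le_of_le_one_right (norm_nonneg _) (hf'_le _)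
  · refine .of_norm_bounded hw.abs fun i => ?_
    rw [norm_mul]
    exact mul_le_of_le_one_right (norm_nonneg _) (hf_le _)

lemma deriv_deriv_tsum_mul_cos {w k : ι → ℝ} (hw : Summable w)
    (hwk : Summable fun i => w i * k i) (hwk2 : Summable fun i => w i * k i * k i) (t : ℝ) :
    deriv (fun t => deriv (fun s => ∑' i, w i * cos (k i * s)) t) t =
      ∑' i, w i * k i * k i * -cos (k i * t) := by
  have hderiv : deriv (fun s => ∑' i, w i * cos (k i * s)) =
      fun t => ∑' i, w i * k i * -sin (k i * t) := by
    ext s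
    exact (hasDerivAt_tsum_mul_comp hasDerivAt_cos abs_cos_le_one
      (fun t => by simpa using abs_sin_le_one t) hw hwk s).deriv
  rw [hderiv]
  exact (hasDerivAt_tsum_mul_comp (fun t => (hasDerivAt_sin t).neg)
    (fun t => by simpa using abs_sin_le_one t) (fun t => by simpa using abs_cos_le_one t)
    hwk hwk2 t).deriv

end TrigSeries

/-! ### Expansion of solutions of `v = a • G v` -/

section Bifurcation

variable {E : Type*} [NormedAddCommGroup E] [NormedSpace ℝ E]

lemma exists_tendsto_eventually_eq_smul [CompleteSpace E] {G : E → E} {G' : E →L[ℝ] E}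
    (hG : HasStrictFDerivAt G G' 0) :
    ∃ v : ℝ → E, Tendsto v (𝓝 0) (𝓝 0) ∧ ∀ᶠ a in 𝓝 0, v a = a • G (v a) := by
  have hstrict : HasStrictFDerivAt (fun q : ℝ × E => q.2 - q.1 • G q.2)
      (.snd ℝ ℝ E - (ContinuousLinearMap.fst ℝ ℝ E).smulRight (G 0)) ((0 : ℝ), (0 : E)) := by
    have hGsnd : HasStrictFDerivAt (fun q : ℝ × E => G q.2) (G' ∘L .snd ℝ ℝ E) ((0 : ℝ), (0 : E)) :=
      HasStrictFDerivAt.comp (g := G) (f := Prod.snd) _ hG hasStrictFDerivAt_snd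
    exact (hasStrictFDerivAt_snd.sub (hasStrictFDerivAt_fst.smul hGsnd)).congr_fderiv
      (by ext <;> simp)
  have hinv : ((.snd ℝ ℝ E - (ContinuousLinearMap.fst ℝ ℝ E).smulRight (G 0)) ∘L
      .inr ℝ ℝ E).IsInvertible := by
    refine ⟨.refl ℝ E, ?_⟩
    ext; simp
  refine ⟨hstrict.implicitFunctionOfProdDomain hinv,
    hstrict.tendsto_implicitFunctionOfProdDomain hinv, ?_⟩
  filter_upwards [hstrict.eventually_apply_implicitFunctionOfProdDomain hinv] with a ha
  simpa [sub_eq_zero] using ha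

lemma isBigO_id_of_eventually_eq_smul {G : E → E} (hG : ContinuousAt G 0) {v : ℝ → E}
    (hv : Tendsto v (𝓝 0) (𝓝 0)) (hfix : ∀ᶠ a in 𝓝 0, v a = a • G (v a)) :
    v =O[𝓝 0] fun a => a := by
  have hGv : (fun a => G (v a)) =O[𝓝 0] fun _ => (1 : ℝ) := (hG.tendsto.comp hv).isBigO_one ℝ
  simpa using ((isBigO_refl (fun a : ℝ => a) (𝓝 0)).smul hGv).congr'
    (hfix.mono fun _ h => h.symm) .rfl

lemma isBigO_clm_apply₂ {F G α : Type*} [NormedAddCommGroup F] [NormedSpace ℝ F]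
    [NormedAddCommGroup G] [NormedSpace ℝ G] {l : Filter α} (B : E →L[ℝ] F →L[ℝ] G) {u : α → E}
    {v : α → F} {f g : α → ℝ} (hu : u =O[l] f) (hv : v =O[l] g) :
    (fun x => B (u x) (v x)) =O[l] fun x => f x * g x :=
  B.isBoundedBilinearMap.isBigO_comp.trans (hu.norm_left.mul hv.norm_left)

lemma isBigO_smul_clm_apply {F : Type*} [NormedAddCommGroup F] [NormedSpace ℝ F] (L : E →L[ℝ] F)
    {u : ℝ → E} {n : ℕ} (hu : u =O[𝓝 0] fun a => a ^ n) :
    (fun a => a • L (u a)) =O[𝓝 0] fun a => a ^ (n + 1) := by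
  simpa only [smul_eq_mul, ← pow_succ'] using
    (isBigO_refl (fun a : ℝ => a) (𝓝 0)).smul ((L.isBigO_comp u _).trans hu)

variable (B : E →L[ℝ] E →L[ℝ] E) (T : E →L[ℝ] E) (ℓ : E →L[ℝ] ℝ) (e : E)

/-- The component `κ` along the kernel direction `e` of the square of `ψ = e + v`, where `B` is the
product and `ℓ` reads off the component. -/
def kernelCoeff (v : E) : ℝ := ℓ (B (e + v) (e + v))

/-- The right-hand side of the Lyapunov–Schmidt equation `v = a • G v` for the part `v` of
`ψ = e + v` transversal to the kernel direction `e`, where `T` inverts the linearization. -/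
def reducedMap (v : E) : E := T (B (e + v) (e + v) - kernelCoeff B ℓ e v • v)

lemma contDiff_reducedMap : ContDiff ℝ 1 (reducedMap B T ℓ e) := by
  have hshift : ContDiff ℝ 1 fun v : E => e + v := by fun_prop
  have hsq : ContDiff ℝ 1 fun v : E => B (e + v) (e + v) :=
    (B.contDiff.comp hshift).clm_apply hshift
  exact T.contDiff.comp (hsq.sub ((ℓ.contDiff.comp hsq).smul contDiff_id))

variable {B T ℓ e}

lemma bilin_add_self_apply (hB : ∀ u v, B u v = B v u) (v : E) :
    B (e + v) (e + v) = B e e + (2 : ℝ) • B e v + B v v := by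
  simp only [map_add, add_apply, hB v e]
  module

lemma kernelCoeff_eq (hB : ∀ u v, B u v = B v u) (he : ℓ (B e e) = 0) (v : E) :
    kernelCoeff B ℓ e v = 2 * ℓ (B e v) + ℓ (B v v) := by
  rw [kernelCoeff, bilin_add_self_apply hB]
  simp [he]

lemma kernelCoeff_isBigO_id (hB : ∀ u v, B u v = B v u) (he : ℓ (B e e) = 0) {v : ℝ → E}
    (hv : v =O[𝓝 0] fun a => a) :
    (fun a => kernelCoeff B ℓ e (v a)) =O[𝓝 0] fun a => a := by
  have hone : (fun a : ℝ => a) =O[𝓝 0] fun _ => (1 : ℝ) := tendsto_id.isBigO_one ℝ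
  have hlin : (fun a => ℓ (B e (v a))) =O[𝓝 0] fun a => a :=
    ((ℓ ∘L B e).isBigO_comp v _).trans hv
  have hquad : (fun a => ℓ (B (v a) (v a))) =O[𝓝 0] fun a => a := by
    simpa using (ℓ.isBigO_comp _ _).trans (isBigO_clm_apply₂ B (hv.trans hone) hv)
  simpa only [kernelCoeff_eq hB he] using (hlin.const_mul_left 2).add hquad

lemma reducedMap_eq (hB : ∀ u v, B u v = B v u) (v : E) :
    reducedMap B T ℓ e v = T (B e e) + (2 : ℝ) • T (B e v) +
      (T (B v v) - kernelCoeff B ℓ e v • T v) := by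
  rw [reducedMap, bilin_add_self_apply hB]
  simp only [map_sub, map_add, map_smul]
  module

lemma fixedPoint_sub_linearized_isBigO_cube (hB : ∀ u v, B u v = B v u) (he : ℓ (B e e) = 0)
    {v : ℝ → E} (hv : v =O[𝓝 0] fun a => a)
    (hfix : ∀ᶠ a in 𝓝 0, v a = a • reducedMap B T ℓ e (v a)) :
    (fun a => v a - a • (T (B e e) + (2 : ℝ) • T (B e (v a)))) =O[𝓝 0] fun a => a ^ 3 := by
  have hquad : (fun a => T (B (v a) (v a))) =O[𝓝 0] fun a => a * a :=
    (T.isBigO_comp _ _).trans (isBigO_clm_apply₂ B hv hv)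
  have hcoeff : (fun a => kernelCoeff B ℓ e (v a) • T (v a)) =O[𝓝 0] fun a => a * a :=
    (kernelCoeff_isBigO_id hB he hv).smul ((T.isBigO_comp v _).trans hv)
  refine ((isBigO_refl (fun a : ℝ => a) (𝓝 0)).smul (hquad.sub hcoeff)).congr'
    (hfix.mono fun a ha => ?_) (.of_forall fun a => by simp only [smul_eq_mul]; ring)
  rw [reducedMap_eq hB] at ha
  linear_combination (norm := module) -ha

lemma fixedPoint_sub_first_order_isBigO_sq (hB : ∀ u v, B u v = B v u) (he : ℓ (B e e) = 0)
    {v : ℝ → E} (hv : v =O[𝓝 0] fun a => a)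
    (hfix : ∀ᶠ a in 𝓝 0, v a = a • reducedMap B T ℓ e (v a)) :
    (fun a => v a - a • T (B e e)) =O[𝓝 0] fun a => a ^ 2 := by
  have hcubic := (fixedPoint_sub_linearized_isBigO_cube hB he hv hfix).trans
    (isLittleO_pow_pow (𝕜 := ℝ) (by norm_num : 2 < 3)).isBigO
  have hlin : (fun a => a • (2 : ℝ) • T (B e (v a))) =O[𝓝 0] fun a => a ^ 2 :=
    isBigO_smul_clm_apply (n := 1) ((2 : ℝ) • T ∘L B e) (by simpa only [pow_one] using hv)
  exact (hcubic.add hlin).congr_left fun a => by module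

lemma fixedPoint_sub_second_order_isBigO_cube (hB : ∀ u v, B u v = B v u) (he : ℓ (B e e) = 0)
    {v : ℝ → E} (hv : v =O[𝓝 0] fun a => a)
    (hfix : ∀ᶠ a in 𝓝 0, v a = a • reducedMap B T ℓ e (v a))
    {V₁ V₂ : E} (hV₁ : T (B e e) = V₁) (hV₂ : (2 : ℝ) • T (B e V₁) = V₂) :
    (fun a => v a - (a • V₁ + a ^ 2 • V₂)) =O[𝓝 0] fun a => a ^ 3 := by
  have hlin : (fun a => a • (2 : ℝ) • T (B e (v a - a • V₁))) =O[𝓝 0] fun a => a ^ 3 :=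
    isBigO_smul_clm_apply ((2 : ℝ) • T ∘L B e)
      (hV₁ ▸ fixedPoint_sub_first_order_isBigO_sq hB he hv hfix)
  refine ((fixedPoint_sub_linearized_isBigO_cube hB he hv hfix).add hlin).congr_left fun a => ?_
  rw [← hV₂, hV₁]
  simp only [map_sub, map_smul]
  module

lemma kernelCoeff_sub_second_order_isBigO_cube (hB : ∀ u v, B u v = B v u) (he : ℓ (B e e) = 0)
    {v : ℝ → E} (hv : v =O[𝓝 0] fun a => a)
    (hfix : ∀ᶠ a in 𝓝 0, v a = a • reducedMap B T ℓ e (v a))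
    {V₁ V₂ : E} (hV₁ : T (B e e) = V₁) (hV₂ : (2 : ℝ) • T (B e V₁) = V₂) :
    (fun a => kernelCoeff B ℓ e (v a) -
      (a * (2 * ℓ (B e V₁)) + a ^ 2 * (2 * ℓ (B e V₂) + ℓ (B V₁ V₁)))) =O[𝓝 0] fun a => a ^ 3 := by
  have hw : (fun a => v a - a • V₁) =O[𝓝 0] fun a => a ^ 2 :=
    hV₁ ▸ fixedPoint_sub_first_order_isBigO_sq hB he hv hfix
  have hlin : (fun a => 2 * ℓ (B e (v a - (a • V₁ + a ^ 2 • V₂)))) =O[𝓝 0] fun a => a ^ 3 :=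
    (((ℓ ∘L B e).isBigO_comp _ _).trans
      (fixedPoint_sub_second_order_isBigO_cube hB he hv hfix hV₁ hV₂)).const_mul_left 2
  -- With `w = v - a V₁`, bilinearity gives `B v v - a² B V₁ V₁ = B w v + a B V₁ w`.
  have hleft : (fun a => ℓ (B (v a - a • V₁) (v a))) =O[𝓝 0] fun a => a ^ 3 := by
    simpa only [← pow_succ] using (ℓ.isBigO_comp _ _).trans (isBigO_clm_apply₂ B hw hv)
  have hright : (fun a => a * ℓ (B V₁ (v a - a • V₁))) =O[𝓝 0] fun a => a ^ 3 :=
    isBigO_smul_clm_apply (ℓ ∘L B V₁) hw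
  refine ((hlin.add hleft).add hright).congr_left fun a => ?_
  simp only [kernelCoeff_eq hB he, map_sub, map_add, map_smul, sub_apply, smul_apply, smul_eq_mul]
  ring

end Bifurcation

/-! ### Cosine series with exponentially decaying coefficients -/

/-- The Banach space of double cosine series `∑ c (m, n) cos (m x) cos (n y)` with
`∑ |c (m, n)| 2 ^ (m + n) < ∞`. The entries of `u : CosSeries` are the weighted coefficients
`c (m, n) * 2 ^ (m + n)`, so that the weighted norm is the `ℓ¹` norm. -/
abbrev CosSeries := ℓ¹(ℕ × ℕ, ℝ)

namespace CosSeries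

/-- The coefficient of `cos (m x) cos (n y)`, for `p = (m, n)`. -/
def coeff (u : CosSeries) (p : ℕ × ℕ) : ℝ := u p / 2 ^ (p.1 + p.2)

/-- The function `cos (m x) cos (n y)`, for `p = (m, n)`, as a cosine series. -/
def cosMode (p : ℕ × ℕ) : CosSeries := lp.single 1 p (2 ^ (p.1 + p.2))

lemma norm_cosMode (p : ℕ × ℕ) : ‖cosMode p‖ = 2 ^ (p.1 + p.2) := by
  rw [cosMode, lp.norm_single (by simp)]
  simp

section Lift

variable {F : Type*} [NormedAddCommGroup F] [NormedSpace ℝ F]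

lemma norm_two_pow_inv_smul_le {M : ℕ × ℕ → F} {K : ℝ} (hK : ∀ p, ‖M p‖ ≤ K * 2 ^ (p.1 + p.2))
    (p : ℕ × ℕ) : ‖((2 : ℝ) ^ (p.1 + p.2))⁻¹ • M p‖ ≤ K := by
  rw [norm_smul, norm_inv, norm_pow, Real.norm_ofNat, inv_mul_le_iff₀ (by positivity), mul_comm]
  exact hK p

variable [CompleteSpace F]

/-- The bounded linear map on cosine series determined by its values `M` on the modes. -/
def lift (M : ℕ × ℕ → F) (hM : ∃ K, ∀ p, ‖M p‖ ≤ K * 2 ^ (p.1 + p.2)) : CosSeries →L[ℝ] F :=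
  lpOneLift (fun p => ((2 : ℝ) ^ (p.1 + p.2))⁻¹ • M p)
    (hM.imp fun _ hK => norm_two_pow_inv_smul_le hK)

variable {M : ℕ × ℕ → F} (hM : ∃ K, ∀ p, ‖M p‖ ≤ K * 2 ^ (p.1 + p.2))

lemma lift_apply (u : CosSeries) : lift M hM u = ∑' p, coeff u p • M p := by
  simp only [lift, lpOneLift_apply, coeff, div_eq_mul_inv, mul_smul]

lemma summable_coeff_smul (hM : ∃ K, ∀ p, ‖M p‖ ≤ K * 2 ^ (p.1 + p.2)) (u : CosSeries) :
    Summable fun p => coeff u p • M p := by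
  simpa only [coeff, div_eq_mul_inv, mul_smul] using
    lpOne_summable_smul (hM.imp fun _ hK => norm_two_pow_inv_smul_le hK) u

lemma lift_cosMode (p : ℕ × ℕ) : lift M hM (cosMode p) = M p := by
  simp [lift, cosMode, lpOneLift_single]

lemma norm_lift_le {K : ℝ} (hK : ∀ p, ‖M p‖ ≤ K * 2 ^ (p.1 + p.2)) (u : CosSeries) :
    ‖lift M ⟨K, hK⟩ u‖ ≤ K * ‖u‖ :=
  lpOne_norm_tsum_smul_le (norm_two_pow_inv_smul_le hK) u

end Lift

lemma ext_cosMode {F : Type*} [NormedAddCommGroup F] [NormedSpace ℝ F]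
    {S T : CosSeries →L[ℝ] F} (h : ∀ p, S (cosMode p) = T (cosMode p)) : S = T := by
  refine lp.ext_continuousLinearMap (by simp) fun p => ?_
  ext
  have hmode : lp.single 1 p (1 : ℝ) = ((2 : ℝ) ^ (p.1 + p.2))⁻¹ • cosMode p := by
    rw [cosMode, ← lp.single_smul]
    simp
  simpa [hmode] using congrArg (((2 : ℝ) ^ (p.1 + p.2))⁻¹ • ·) (h p)

lemma exists_abs_le_mul_two_pow {k : ℕ} {M : ℕ × ℕ → ℝ}
    (hM : ∀ p, |M p| ≤ ((p.1 : ℝ) + p.2) ^ k) : ∃ K, ∀ p, ‖M p‖ ≤ K * 2 ^ (p.1 + p.2) :=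
  (exists_natCast_pow_le_mul_pow k one_lt_two).imp fun _ hK p =>
    (hM p).trans (by simpa using hK (p.1 + p.2))

lemma summable_coeff_mul {k : ℕ} {M : ℕ × ℕ → ℝ} (hM : ∀ p, |M p| ≤ ((p.1 : ℝ) + p.2) ^ k)
    (u : CosSeries) : Summable fun p => coeff u p * M p :=
  summable_coeff_smul (exists_abs_le_mul_two_pow hM) u

/-! ### Evaluation and multiplication -/

/-- The function `cos (m x) cos (n y)`, for `p = (m, n)`. -/
def cosCos (p : ℕ × ℕ) (x y : ℝ) : ℝ := cos (p.1 * x) * cos (p.2 * y)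

lemma abs_cosCos_le_one (p : ℕ × ℕ) (x y : ℝ) : |cosCos p x y| ≤ 1 := by
  rw [cosCos, abs_mul]
  exact mul_le_one₀ (abs_cos_le_one _) (abs_nonneg _) (abs_cos_le_one _)

lemma norm_cosCos_le (p : ℕ × ℕ) (x y : ℝ) : ‖cosCos p x y‖ ≤ 1 * 2 ^ (p.1 + p.2) := by
  rw [one_mul]
  exact (abs_cosCos_le_one p x y).trans (one_le_pow₀ one_le_two)

/-- The sum of a cosine series at the point `(x, y)`. -/
def eval (x y : ℝ) : CosSeries →L[ℝ] ℝ := lift (cosCos · x y) ⟨1, (norm_cosCos_le · x y)⟩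

lemma eval_cosMode (x y : ℝ) (p : ℕ × ℕ) : eval x y (cosMode p) = cosCos p x y :=
  lift_cosMode _ p

lemma eval_apply (x y : ℝ) (u : CosSeries) : eval x y u = ∑' p, coeff u p * cosCos p x y :=
  lift_apply _ u

lemma abs_eval_le_norm (x y : ℝ) (u : CosSeries) : |eval x y u| ≤ ‖u‖ :=
  (norm_lift_le (norm_cosCos_le · x y) u).trans_eq (one_mul _)

/-- The product of two modes, expanded into modes by the addition formulas. -/
def mulModes (p q : ℕ × ℕ) : CosSeries :=
  (4⁻¹ : ℝ) • (cosMode (p.1 + q.1, p.2 + q.2) + cosMode (p.1 + q.1, p.2.dist q.2)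
    + cosMode (p.1.dist q.1, p.2 + q.2) + cosMode (p.1.dist q.1, p.2.dist q.2))

lemma norm_mulModes_le (p q : ℕ × ℕ) :
    ‖mulModes p q‖ ≤ 2 ^ (p.1 + p.2) * 2 ^ (q.1 + q.2) := by
  have hdist (m n : ℕ) : m.dist n ≤ m + n := by
    rw [Nat.dist]
    omega
  have hmode (m n : ℕ) (hm : m ≤ p.1 + q.1) (hn : n ≤ p.2 + q.2) :
      ‖cosMode (m, n)‖ ≤ 2 ^ (p.1 + p.2) * 2 ^ (q.1 + q.2) := by
    rw [norm_cosMode, ← pow_add]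
    exact pow_le_pow_right₀ one_le_two (by dsimp only; omega)
  rw [mulModes, norm_smul, Real.norm_of_nonneg (by norm_num)]
  linarith [norm_add₄_le (a := cosMode (p.1 + q.1, p.2 + q.2))
      (b := cosMode (p.1 + q.1, p.2.dist q.2)) (c := cosMode (p.1.dist q.1, p.2 + q.2))
      (d := cosMode (p.1.dist q.1, p.2.dist q.2)),
    hmode _ _ le_rfl le_rfl, hmode _ _ le_rfl (hdist p.2 q.2), hmode _ _ (hdist p.1 q.1) le_rfl,
    hmode _ _ (hdist p.1 q.1) (hdist p.2 q.2)]

lemma mulModes_comm (p q : ℕ × ℕ) : mulModes p q = mulModes q p := by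
  simp only [mulModes, add_comm p.1, add_comm p.2, Nat.dist_comm p.1, Nat.dist_comm p.2]

lemma eval_mulModes (x y : ℝ) (p q : ℕ × ℕ) :
    eval x y (mulModes p q) = cosCos p x y * cosCos q x y := by
  simp only [mulModes, map_smul, map_add, eval_cosMode, smul_eq_mul]
  simp only [cosCos]
  rw [mul_mul_mul_comm, cos_mul_cos_eq_dist, cos_mul_cos_eq_dist]
  ring

/-- Multiplication by the mode `p`. -/
def mulMode (p : ℕ × ℕ) : CosSeries →L[ℝ] CosSeries :=
  lift (mulModes p) ⟨2 ^ (p.1 + p.2), norm_mulModes_le p⟩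

lemma norm_mulMode_le (p : ℕ × ℕ) : ‖mulMode p‖ ≤ 1 * 2 ^ (p.1 + p.2) := by
  rw [one_mul]
  exact ContinuousLinearMap.opNorm_le_bound _ (by positivity) (norm_lift_le (norm_mulModes_le p))

/-- Pointwise multiplication of cosine series. -/
def mul : CosSeries →L[ℝ] CosSeries →L[ℝ] CosSeries := lift mulMode ⟨1, norm_mulMode_le⟩

lemma mul_cosMode (p q : ℕ × ℕ) : mul (cosMode p) (cosMode q) = mulModes p q := by
  rw [mul, lift_cosMode, mulMode, lift_cosMode]

lemma mul_comm_apply (u v : CosSeries) : mul u v = mul v u := by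
  have hflip : mul = mul.flip := by
    refine ext_cosMode fun p => ext_cosMode fun q => ?_
    rw [ContinuousLinearMap.flip_apply, mul_cosMode, mul_cosMode, mulModes_comm]
  exact DFunLike.congr_fun (DFunLike.congr_fun hflip u) v

lemma eval_mul (x y : ℝ) (u v : CosSeries) : eval x y (mul u v) = eval x y u * eval x y v := by
  have hbilin : (ContinuousLinearMap.compL ℝ CosSeries CosSeries ℝ (eval x y)) ∘L mul =
      ((ContinuousLinearMap.mul ℝ ℝ).bilinearComp (eval x y) (eval x y)) := by
    refine ext_cosMode fun p => ext_cosMode fun q => ?_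
    simp [mul_cosMode, eval_mulModes, eval_cosMode]
  exact DFunLike.congr_fun (DFunLike.congr_fun hbilin u) v

/-! ### Regularity, symmetries and the Laplacian -/

lemma contDiff_tsum_coeff_mul_cos {V : Type*} [NormedAddCommGroup V] [NormedSpace ℝ V]
    (u : CosSeries) {L : ℕ × ℕ → V →L[ℝ] ℝ}
    (hL : ∀ p, ‖L p‖ ≤ (p.1 : ℝ) + p.2) :
    ContDiff ℝ (⊤ : ℕ∞) fun z => ∑' p, coeff u p * cos (L p z) :=
  contDiff_tsum_mul_cos fun k => summable_coeff_mul (k := k)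
    (fun p => by
      rw [abs_of_nonneg (by positivity)]
      exact pow_le_pow_left₀ (norm_nonneg _) (hL p) k) u

/-- The phase `m x + ε n y` as a linear form in `(x, y)`, for `p = (m, n)`. -/
def phase (ε : ℝ) (p : ℕ × ℕ) : ℝ × ℝ →L[ℝ] ℝ :=
  (p.1 : ℝ) • .fst ℝ ℝ ℝ + (ε * p.2) • .snd ℝ ℝ ℝ

lemma norm_phase_le {ε : ℝ} (hε : |ε| ≤ 1) (p : ℕ × ℕ) : ‖phase ε p‖ ≤ (p.1 : ℝ) + p.2 := by
  calc ‖phase ε p‖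
      ≤ ‖(p.1 : ℝ)‖ * ‖ContinuousLinearMap.fst ℝ ℝ ℝ‖
        + ‖ε * (p.2 : ℝ)‖ * ‖ContinuousLinearMap.snd ℝ ℝ ℝ‖ :=
        (norm_add_le _ _).trans_eq (by rw [norm_smul, norm_smul])
    _ ≤ p.1 * 1 + 1 * p.2 * 1 := by
        rw [norm_mul, RCLike.norm_natCast, RCLike.norm_natCast]
        gcongr
        · exact ContinuousLinearMap.norm_fst_le ..
        · exact hε
        · exact ContinuousLinearMap.norm_snd_le ..
    _ = p.1 + p.2 := by ring

lemma cosCos_eq_phase (p : ℕ × ℕ) (z : ℝ × ℝ) :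
    cosCos p z.1 z.2 = (cos (phase 1 p z) + cos (phase (-1) p z)) / 2 := by
  simp only [cosCos, phase, add_apply, smul_apply, ContinuousLinearMap.coe_fst',
    ContinuousLinearMap.coe_snd', smul_eq_mul, one_mul, neg_mul, ← sub_eq_add_neg]
  linear_combination two_mul_cos_mul_cos (p.1 * z.1) (p.2 * z.2) / 2

lemma summable_coeff_mul_cos (u : CosSeries) (f : ℕ × ℕ → ℝ) :
    Summable fun p => coeff u p * cos (f p) :=
  summable_coeff_mul (k := 0) (fun p => by simpa using abs_cos_le_one _) u

lemma smooth2_eval (u : CosSeries) : Smooth2 fun x y => eval x y u := by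
  have hsplit (z : ℝ × ℝ) : eval z.1 z.2 u =
      (∑' p, coeff u p * cos (phase 1 p z) + ∑' p, coeff u p * cos (phase (-1) p z)) / 2 := by
    rw [← (summable_coeff_mul_cos u _).tsum_add (summable_coeff_mul_cos u _), ← tsum_div_const,
      eval_apply]
    exact tsum_congr fun p => by rw [cosCos_eq_phase]; ring
  simp only [Smooth2, hsplit]
  exact ((contDiff_tsum_coeff_mul_cos u (norm_phase_le (by simp))).add
    (contDiff_tsum_coeff_mul_cos u (norm_phase_le (by simp)))).div_const 2

lemma dblPeriodic_eval (u : CosSeries) : DblPeriodic fun x y => eval x y u := fun x y => by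
  simp only [eval_apply, cosCos, mul_add, cos_add_nat_mul_two_pi, and_self]

lemma symFun_eval (u : CosSeries) : SymFun fun x y => eval x y u := fun x y => by
  simp only [eval_apply, cosCos, mul_neg, cos_neg, and_self]

lemma deriv_deriv_tsum_coeff_mul_cos (u : CosSeries) {k t : ℕ × ℕ → ℝ}
    (hk : ∀ p, |k p| ≤ (p.1 : ℝ) + p.2) (ht : ∀ p, |t p| ≤ 1) (s : ℝ) :
    deriv (fun s => deriv (fun s => ∑' p, coeff u p * t p * cos (k p * s)) s) s =
      -∑' p, coeff u p * (k p ^ 2 * (t p * cos (k p * s))) := by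
  have hpow (j : ℕ) (p : ℕ × ℕ) : |t p * k p ^ j| ≤ ((p.1 : ℝ) + p.2) ^ j := by
    rw [abs_mul, abs_pow]
    exact (mul_le_of_le_one_left (by positivity) (ht p)).trans
      (pow_le_pow_left₀ (abs_nonneg _) (hk p) j)
  rw [deriv_deriv_tsum_mul_cos, ← tsum_neg]
  · exact tsum_congr fun p => by ring
  · simpa using summable_coeff_mul (hpow 0) u
  · simpa [mul_assoc] using summable_coeff_mul (hpow 1) u
  · simpa [mul_assoc, sq] using summable_coeff_mul (hpow 2) u

lemma deriv_deriv_eval_fst (u : CosSeries) (x y : ℝ) :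
    deriv (fun t => deriv (fun s => eval s y u) t) x =
      -∑' p, coeff u p * ((p.1 : ℝ) ^ 2 * cosCos p x y) := by
  have heval (s : ℝ) : eval s y u = ∑' p : ℕ × ℕ, coeff u p * cos (p.2 * y) * cos (p.1 * s) := by
    rw [eval_apply]
    exact tsum_congr fun p => by rw [cosCos]; ring
  simp only [heval]
  rw [deriv_deriv_tsum_coeff_mul_cos u (by simp) fun p => abs_cos_le_one _]
  exact congrArg _ (tsum_congr fun p => by rw [cosCos]; ring)

lemma deriv_deriv_eval_snd (u : CosSeries) (x y : ℝ) :
    deriv (fun t => deriv (fun s => eval x s u) t) y =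
      -∑' p, coeff u p * ((p.2 : ℝ) ^ 2 * cosCos p x y) := by
  simp only [eval_apply, cosCos, ← mul_assoc (coeff u _)]
  rw [deriv_deriv_tsum_coeff_mul_cos u (by simp) fun p => abs_cos_le_one _]
  simp only [mul_assoc]

lemma abs_mul_cosCos_le {r R : ℝ} (hr : 0 ≤ r) (hrR : r ≤ R) (p : ℕ × ℕ) (x y : ℝ) :
    |r * cosCos p x y| ≤ R := by
  rw [abs_mul, abs_of_nonneg hr]
  exact (mul_le_of_le_one_right hr (abs_cosCos_le_one p x y)).trans hrR

/-- The value at `(x, y)` of minus the Laplacian of a cosine series. -/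
def negLap (x y : ℝ) : CosSeries →L[ℝ] ℝ :=
  lift (fun p => ((p.1 : ℝ) ^ 2 + (p.2 : ℝ) ^ 2) * cosCos p x y)
    (exists_abs_le_mul_two_pow fun p => abs_mul_cosCos_le (by positivity)
      (pow_add_pow_le p.1.cast_nonneg p.2.cast_nonneg two_ne_zero) p x y)

lemma negLap_cosMode (x y : ℝ) (p : ℕ × ℕ) :
    negLap x y (cosMode p) = ((p.1 : ℝ) ^ 2 + (p.2 : ℝ) ^ 2) * cosCos p x y :=
  lift_cosMode _ p

lemma lap_eval (u : CosSeries) (x y : ℝ) : lap (fun x y => eval x y u) x y = -negLap x y u := by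
  have hfst : Summable fun p => coeff u p * ((p.1 : ℝ) ^ 2 * cosCos p x y) :=
    summable_coeff_mul (k := 2)
      (fun p => abs_mul_cosCos_le (by positivity) (by gcongr; simp) p x y) u
  have hsnd : Summable fun p => coeff u p * ((p.2 : ℝ) ^ 2 * cosCos p x y) :=
    summable_coeff_mul (k := 2)
      (fun p => abs_mul_cosCos_le (by positivity) (by gcongr; simp) p x y) u
  rw [lap, deriv_deriv_eval_fst, deriv_deriv_eval_snd, ← neg_add, ← hfst.tsum_add hsnd, negLap,
    lift_apply]
  exact congrArg _ (tsum_congr fun p => by rw [smul_eq_mul]; ring)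

end CosSeries

/-! ### The bifurcation at `c = 2` -/

namespace CosSeries

/-- The function `cos x cos y`, which spans the kernel of `-Δ - 2`. -/
abbrev kernelMode : CosSeries := cosMode (1, 1)

/-- The coefficient of `cos x cos y` in a cosine series. -/
def kernelProj : CosSeries →L[ℝ] ℝ :=
  lift (fun p => if p = (1, 1) then 1 else 0) ⟨1, fun p => by
    have hone : (1 : ℝ) ≤ 2 ^ (p.1 + p.2) := one_le_pow₀ one_le_two
    split_ifs <;> simp [hone]⟩

lemma kernelProj_cosMode (p : ℕ × ℕ) : kernelProj (cosMode p) = if p = (1, 1) then 1 else 0 :=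
  lift_cosMode _ p

/-- The eigenvalue of `-Δ - 2` on the mode `cos (m x) cos (n y)`, for `p = (m, n)`. -/
def detuning (p : ℕ × ℕ) : ℤ := (p.1 : ℤ) ^ 2 + (p.2 : ℤ) ^ 2 - 2

lemma detuning_eq_zero_iff (p : ℕ × ℕ) : detuning p = 0 ↔ p = (1, 1) := by
  obtain ⟨m, n⟩ := p
  refine ⟨fun h => ?_, by rintro ⟨⟩; rfl⟩
  simp only [detuning] at h
  have hm : m ≤ 1 := by nlinarith
  have hn : n ≤ 1 := by nlinarith
  interval_cases m <;> interval_cases n <;> simp_all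

lemma norm_detuning_inv_smul_cosMode_le (p : ℕ × ℕ) :
    ‖(detuning p : ℝ)⁻¹ • cosMode p‖ ≤ 1 * 2 ^ (p.1 + p.2) := by
  rw [norm_smul, norm_cosMode, norm_inv]
  gcongr
  rcases eq_or_ne (detuning p) 0 with h | h
  · simp [h]
  · exact inv_le_one_of_one_le₀ (by simpa using mod_cast Int.one_le_abs h)

/-- The inverse of `-Δ - 2` on the complement of `kernelMode`; it vanishes on `kernelMode` because
`0⁻¹ = 0`. -/
def reducedResolvent : CosSeries →L[ℝ] CosSeries :=
  lift (fun p => (detuning p : ℝ)⁻¹ • cosMode p) ⟨1, norm_detuning_inv_smul_cosMode_le⟩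

lemma reducedResolvent_cosMode (p : ℕ × ℕ) :
    reducedResolvent (cosMode p) = (detuning p : ℝ)⁻¹ • cosMode p :=
  lift_cosMode _ p

lemma kernelProj_reducedResolvent (u : CosSeries) : kernelProj (reducedResolvent u) = 0 := by
  have hcomp : kernelProj ∘L reducedResolvent = 0 := by
    refine ext_cosMode fun p => ?_
    simp [reducedResolvent_cosMode, kernelProj_cosMode, detuning_eq_zero_iff]
  exact DFunLike.congr_fun hcomp u

lemma negLap_reducedResolvent (x y : ℝ) (u : CosSeries) :
    negLap x y (reducedResolvent u) =
      2 * eval x y (reducedResolvent u) + eval x y u - kernelProj u * eval x y kernelMode := by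
  have hcomp : negLap x y ∘L reducedResolvent = (2 : ℝ) • (eval x y ∘L reducedResolvent) + eval x y
      - kernelProj.smulRight (eval x y kernelMode) := by
    refine ext_cosMode fun p => ?_
    simp only [ContinuousLinearMap.comp_apply, add_apply, sub_apply, smul_apply,
      ContinuousLinearMap.smulRight_apply, reducedResolvent_cosMode, kernelProj_cosMode, map_smul,
      negLap_cosMode, eval_cosMode, smul_eq_mul]
    rcases eq_or_ne p (1, 1) with rfl | hp
    · simp [detuning]
    · have hne : (detuning p : ℝ) ≠ 0 := mod_cast mt (detuning_eq_zero_iff p).1 hp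
      have hdet : (p.1 : ℝ) ^ 2 + (p.2 : ℝ) ^ 2 = 2 + detuning p := by simp [detuning]
      rw [if_neg hp, hdet]
      field_simp
      ring
  exact DFunLike.congr_fun hcomp u

/-- The frequency `c = 2 - a κ` of the wave `c + a ψ`, `ψ = cos x cos y + v`, where `κ` is the
coefficient of `cos x cos y` in `ψ²`. -/
def waveFrequency (a : ℝ) (v : CosSeries) : ℝ := 2 - a * kernelCoeff mul kernelProj kernelMode v

/-- The wave `c + a ψ` with `ψ = cos x cos y + v`; it solves the standing-wave equation when `v`
solves the Lyapunov–Schmidt equation. -/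
def wave (a : ℝ) (v : CosSeries) : CosSeries :=
  waveFrequency a v • cosMode (0, 0) + a • (kernelMode + v)

lemma negLap_kernelMode_add {a : ℝ} {v : CosSeries}
    (hv : v = a • reducedMap mul reducedResolvent kernelProj kernelMode v) (x y : ℝ) :
    negLap x y (kernelMode + v) =
      waveFrequency a v * eval x y (kernelMode + v) + a * eval x y (kernelMode + v) ^ 2 := by
  set κ := kernelCoeff mul kernelProj kernelMode v with hκ
  set f := mul (kernelMode + v) (kernelMode + v) - κ • v with hf
  have hv' : v = a • reducedResolvent f := hv
  have hproj_v : kernelProj v = 0 := by rw [hv', map_smul, kernelProj_reducedResolvent, smul_zero]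
  have hproj_f : kernelProj f = κ := by
    rw [hf, map_sub, map_smul, hproj_v, smul_zero, sub_zero, hκ, kernelCoeff]
  have hnegLap_v : negLap x y v = 2 * eval x y v + a * (eval x y f - κ * eval x y kernelMode) := by
    conv_lhs => rw [hv']
    conv_rhs => enter [1]; rw [hv']
    simp only [map_smul, smul_eq_mul, negLap_reducedResolvent, hproj_f]
    ring
  have heval_f : eval x y f = eval x y (kernelMode + v) ^ 2 - κ * eval x y v := by
    rw [hf, map_sub, eval_mul, map_smul, smul_eq_mul, sq]
  have hnegLap_e : negLap x y kernelMode = 2 * eval x y kernelMode := by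
    rw [negLap_cosMode, eval_cosMode]
    norm_num
  rw [map_add (negLap x y), hnegLap_e, hnegLap_v, heval_f, map_add, waveFrequency, ← hκ]
  ring

lemma wave_equation {a : ℝ} {v : CosSeries}
    (hv : v = a • reducedMap mul reducedResolvent kernelProj kernelMode v) (x y : ℝ) :
    -lap (fun x y => eval x y (wave a v)) x y + waveFrequency a v * eval x y (wave a v) =
      eval x y (wave a v) ^ 2 := by
  have hconst : eval x y (cosMode (0, 0)) = 1 := by simp [eval_cosMode, cosCos]
  have hnegLap_const : negLap x y (cosMode (0, 0)) = 0 := by simp [negLap_cosMode]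
  rw [lap_eval, neg_neg, wave, map_add (negLap x y), map_add (eval x y)]
  simp only [map_smul, smul_eq_mul, hconst, hnegLap_const, negLap_kernelMode_add hv]
  ring

/-- The first-order corrector `reducedResolvent (cos x cos y)²`. -/
def corrector₁ : CosSeries :=
  (1 / 24 : ℝ) • cosMode (2, 2) + (1 / 8 : ℝ) • cosMode (2, 0) + (1 / 8 : ℝ) • cosMode (0, 2)
    - (1 / 8 : ℝ) • cosMode (0, 0)

/-- The second-order corrector `2 reducedResolvent (cos x cos y · corrector₁)`. -/
def corrector₂ : CosSeries :=
  (7 / 384 : ℝ) • cosMode (3, 1) + (7 / 384 : ℝ) • cosMode (1, 3) + (1 / 768 : ℝ) • cosMode (3, 3)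

lemma mul_kernelMode_kernelMode :
    mul kernelMode kernelMode = (1 / 4 : ℝ) • cosMode (2, 2) + (1 / 4 : ℝ) • cosMode (2, 0)
      + (1 / 4 : ℝ) • cosMode (0, 2) + (1 / 4 : ℝ) • cosMode (0, 0) := by
  simp only [mul_cosMode, mulModes, Nat.dist, Nat.reduceAdd, Nat.reduceSub]
  module

lemma mul_kernelMode_corrector₁ :
    mul kernelMode corrector₁ = (7 / 96 : ℝ) • cosMode (3, 1) + (7 / 96 : ℝ) • cosMode (1, 3)
      + (1 / 96 : ℝ) • cosMode (3, 3) + (1 / 96 : ℝ) • kernelMode := by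
  simp only [corrector₁, map_add, map_sub, map_smul, mul_cosMode, mulModes, Nat.dist,
    Nat.reduceAdd, Nat.reduceSub]
  module

lemma reducedResolvent_mul_kernelMode_kernelMode :
    reducedResolvent (mul kernelMode kernelMode) = corrector₁ := by
  simp only [mul_kernelMode_kernelMode, corrector₁, map_add, map_smul, reducedResolvent_cosMode]
  match_scalars <;> norm_num [detuning]

lemma two_smul_reducedResolvent_mul_kernelMode_corrector₁ :
    (2 : ℝ) • reducedResolvent (mul kernelMode corrector₁) = corrector₂ := by
  simp only [mul_kernelMode_corrector₁, corrector₂, map_add, map_smul, reducedResolvent_cosMode]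
  match_scalars <;> norm_num [detuning]

lemma kernelProj_mul_kernelMode_kernelMode : kernelProj (mul kernelMode kernelMode) = 0 := by
  simp [mul_kernelMode_kernelMode, kernelProj_cosMode]

lemma kernelProj_mul_kernelMode_corrector₁ : kernelProj (mul kernelMode corrector₁) = 1 / 96 := by
  simp [mul_kernelMode_corrector₁, kernelProj_cosMode]

lemma kernelProj_mul_kernelMode_corrector₂ : kernelProj (mul kernelMode corrector₂) = 0 := by
  simp [mul_cosMode, mulModes, kernelProj_cosMode, corrector₂, Nat.dist]

lemma kernelProj_mul_corrector₁_corrector₁ : kernelProj (mul corrector₁ corrector₁) = 0 := by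
  simp [mul_cosMode, mulModes, kernelProj_cosMode, corrector₁, Nat.dist]

/-- The third-order Stokes expansion of the wave of amplitude `a`. -/
def stokesExpansion (a : ℝ) : CosSeries :=
  (2 - a ^ 2 / 48) • cosMode (0, 0) + a • kernelMode + a ^ 2 • corrector₁ + a ^ 3 • corrector₂

lemma eval_stokesExpansion (a x y : ℝ) :
    eval x y (stokesExpansion a) = 2 + a * cos x * cos y
      + (a ^ 2 / 8) * (-(7 / 6) + (cos (2 * x) + cos (2 * y)) + (1 / 3) * cos (2 * x) * cos (2 * y))
      + (a ^ 3 / 384) * (7 * (cos (3 * x) * cos y + cos x * cos (3 * y))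
        + (1 / 2) * cos (3 * x) * cos (3 * y)) := by
  simp only [stokesExpansion, corrector₁, corrector₂, map_add, map_sub, map_smul, smul_eq_mul,
    eval_cosMode, cosCos, Nat.cast_zero, Nat.cast_one, Nat.cast_ofNat, zero_mul, one_mul, cos_zero]
  ring

theorem exists_wave_branch :
    ∃ v : ℝ → CosSeries,
      (∀ᶠ a in 𝓝 0, v a = a • reducedMap mul reducedResolvent kernelProj kernelMode (v a)) ∧
      (fun a => waveFrequency a (v a) - (2 - a ^ 2 / 48)) =O[𝓝 0] (fun a => a ^ 4) ∧
      (fun a => wave a (v a) - stokesExpansion a) =O[𝓝 0] fun a => a ^ 4 := by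
  have hG := contDiff_reducedMap mul reducedResolvent kernelProj kernelMode
  obtain ⟨v, hv_tendsto, hfix⟩ := exists_tendsto_eventually_eq_smul
    (hG.contDiffAt.hasStrictFDerivAt one_ne_zero)
  have hv := isBigO_id_of_eventually_eq_smul hG.continuous.continuousAt hv_tendsto hfix
  have hcoeff := kernelCoeff_sub_second_order_isBigO_cube mul_comm_apply
    kernelProj_mul_kernelMode_kernelMode hv hfix reducedResolvent_mul_kernelMode_kernelMode
    two_smul_reducedResolvent_mul_kernelMode_corrector₁
  have hexpansion := fixedPoint_sub_second_order_isBigO_cube mul_comm_apply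
    kernelProj_mul_kernelMode_kernelMode hv hfix reducedResolvent_mul_kernelMode_kernelMode
    two_smul_reducedResolvent_mul_kernelMode_corrector₁
  have hfreq : (fun a => waveFrequency a (v a) - (2 - a ^ 2 / 48)) =O[𝓝 0] fun a => a ^ 4 := by
    refine (isBigO_smul_clm_apply (.id ℝ ℝ) hcoeff).neg_left.congr_left fun a => ?_
    simp only [waveFrequency, kernelProj_mul_kernelMode_corrector₁,
      kernelProj_mul_kernelMode_corrector₂, kernelProj_mul_corrector₁_corrector₁,
      ContinuousLinearMap.id_apply, smul_eq_mul]
    ring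
  refine ⟨v, hfix, hfreq, ?_⟩
  have hconst := ((ContinuousLinearMap.id ℝ ℝ).smulRight (cosMode (0, 0))).isBigO_comp
    (fun a => waveFrequency a (v a) - (2 - a ^ 2 / 48)) (𝓝 0)
  refine ((hconst.trans hfreq).add (isBigO_smul_clm_apply (.id ℝ _) hexpansion)).congr_left
    fun a => ?_
  simp only [wave, stokesExpansion, ContinuousLinearMap.smulRight_apply,
    ContinuousLinearMap.id_apply]
  module

end CosSeries

/-- Existence of small-amplitude periodic waves for p = 1, with the third-order
Stokes expansion `2 + a cos x cos y + ...` and frequency expansion `c = 2 - a²/48 + O(a⁴)`. -/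
theorem small_amplitude_waves_p_one :
    ∃ a₀ > (0:ℝ), ∃ C > (0:ℝ), ∀ a ∈ Set.Ioo (0:ℝ) a₀,
      ∃ (c : ℝ) (φ : ℝ → ℝ → ℝ),
        Smooth2 φ ∧ DblPeriodic φ ∧ SymFun φ ∧
        (∀ x y : ℝ, -(lap φ x y) + c * φ x y = (φ x y)^2) ∧
        (∀ x y : ℝ,
          |φ x y - (2 + a * Real.cos x * Real.cos y
            + (a^2/8) * (-(7/6) + (Real.cos (2*x) + Real.cos (2*y))
                + (1/3) * Real.cos (2*x) * Real.cos (2*y))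
            + (a^3/384) * (7 * (Real.cos (3*x) * Real.cos y + Real.cos x * Real.cos (3*y))
                + (1/2) * Real.cos (3*x) * Real.cos (3*y)))| ≤ C * a^4) ∧
        |c - (2 - a^2/48)| ≤ C * a^4 := by
  obtain ⟨v, hfix, hfreq, hwave⟩ := CosSeries.exists_wave_branch
  obtain ⟨C, hC, hbound⟩ := (hwave.prod_left hfreq).exists_pos
  obtain ⟨a₀, ha₀, hball⟩ := Metric.eventually_nhds_iff.1 (hfix.and hbound.bound)
  refine ⟨a₀, ha₀, C, hC, fun a ha => ?_⟩
  obtain ⟨hva, hle⟩ := hball (y := a) (by rw [dist_zero_right, norm_of_nonneg ha.1.le]; exact ha.2)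
  rw [Prod.norm_mk, max_le_iff, norm_of_nonneg (by positivity : 0 ≤ a ^ 4)] at hle
  refine ⟨CosSeries.waveFrequency a (v a), fun x y => CosSeries.eval x y (CosSeries.wave a (v a)),
    CosSeries.smooth2_eval _, CosSeries.dblPeriodic_eval _, CosSeries.symFun_eval _,
    CosSeries.wave_equation hva, fun x y => ?_, hle.2⟩
  rw [← CosSeries.eval_stokesExpansion, ← map_sub]
  exact (CosSeries.abs_eval_le_norm x y _).trans hle.1
end
end

section
/- Let c > 2 and let φ : ℝ² → ℝ be a smooth, doubly 2π-periodic, symmetric, positive solution of −Δφ + cφ = φ² which minimizes B_c subject to the constraint ∫|u|³ = ∫φ³ (i.e., B_c(φ) ≤ B_c(u) for every smooth, doubly 2π-periodic, symmetric u : ℝ² → ℝ with ∫|u|³ dxdy = ∫φ³ dxdy). Then the quadratic form of 𝓛₂ = −Δ + c − φ is nonnegative with one-dimensional kernel spanned by φ: for every smooth, doubly 2π-periodic, symmetric v : ℝ² → ℝ one has ∫(|∇v|² + c v² − φ v²) dxdy ≥ 0, with equality if and only if v is a real scalar multiple of φ. -/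
/-!
Write `v = φ w` with `w = v / φ`. Then
`|∇(φ w)|² + φ w² Δφ = φ² |∇w|² + div (φ w² ∇φ)`,
and the divergence of a periodic field integrates to zero. If `Δφ = V φ`, the left-hand side is
`|∇v|² + V v²`, so the quadratic form of `-Δ + V` at `v` equals `∫ φ² |∇w|²`. It is therefore
nonnegative, and it vanishes exactly when `w` is constant. Here `V = c - φ`.
-/

noncomputable section
open Real MeasureTheory Filter

/-- integral over the fundamental square [0,2π] × [0,2π] -/
def integ2 (f : ℝ → ℝ → ℝ) : ℝ :=
  ∫ x in (0:ℝ)..(2*π), ∫ y in (0:ℝ)..(2*π), f x y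

/-- partial derivative in the first variable -/
def pdx (u : ℝ → ℝ → ℝ) (x y : ℝ) : ℝ := deriv (fun s => u s y) x

/-- partial derivative in the second variable -/
def pdy (u : ℝ → ℝ → ℝ) (x y : ℝ) : ℝ := deriv (fun s => u x s) y

/-- the functional B_c(u) = (1/2)∫(|∇u|² + c u²) dxdy -/
def Bc (c : ℝ) (u : ℝ → ℝ → ℝ) : ℝ :=
  (1/2) * integ2 (fun x y => (pdx u x y)^2 + (pdy u x y)^2 + c * (u x y)^2)

open Function (uncurry)

section Uncurry

variable {𝕜 E F G : Type*} [NontriviallyNormedField 𝕜] [NormedAddCommGroup E] [NormedSpace 𝕜 E]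
  [NormedAddCommGroup F] [NormedSpace 𝕜 F] [NormedAddCommGroup G] [NormedSpace 𝕜 G]
  {u : E → F → G}

lemma contDiff_uncurry_flip {n : WithTop ℕ∞} (hu : ContDiff 𝕜 n (uncurry u)) :
    ContDiff 𝕜 n (uncurry (flip u)) :=
  hu.comp (contDiff_snd.prodMk contDiff_fst)

lemma differentiable_fst_of_uncurry (hu : Differentiable 𝕜 (uncurry u)) (y : F) :
    Differentiable 𝕜 fun x => u x y :=
  hu.comp (differentiable_id.prodMk (differentiable_const y))

lemma differentiable_snd_of_uncurry (hu : Differentiable 𝕜 (uncurry u)) (x : E) :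
    Differentiable 𝕜 fun y => u x y :=
  hu.comp ((differentiable_const x).prodMk differentiable_id)

end Uncurry

section PartialDerivatives

variable {u : ℝ → ℝ → ℝ} {m n : WithTop ℕ∞}

lemma pdy_eq_flip_pdx_flip (u : ℝ → ℝ → ℝ) : pdy u = flip (pdx (flip u)) := rfl

lemma pdx_eq_fderiv (hu : Differentiable ℝ (uncurry u)) (x y : ℝ) :
    pdx u x y = fderiv ℝ (uncurry u) (x, y) (1, 0) := by
  have hline : HasDerivAt (fun s : ℝ => (s, y)) (1, 0) x :=
    (hasDerivAt_id x).prodMk (hasDerivAt_const x y)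
  exact ((hu (x, y)).hasFDerivAt.comp_hasDerivAt x hline).deriv

lemma contDiff_pdx (hu : ContDiff ℝ n (uncurry u)) (hmn : m + 1 ≤ n) :
    ContDiff ℝ m (uncurry (pdx u)) := by
  have hdiff : Differentiable ℝ (uncurry u) :=
    (hu.of_le (le_add_self.trans hmn)).differentiable one_ne_zero
  have hpdx : uncurry (pdx u) = fun p => fderiv ℝ (uncurry u) p (1, 0) :=
    funext fun p => pdx_eq_fderiv hdiff p.1 p.2
  rw [hpdx]
  exact (hu.fderiv_right hmn).clm_apply contDiff_const

lemma contDiff_pdy (hu : ContDiff ℝ n (uncurry u)) (hmn : m + 1 ≤ n) :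
    ContDiff ℝ m (uncurry (pdy u)) := by
  rw [pdy_eq_flip_pdx_flip]
  exact contDiff_uncurry_flip (contDiff_pdx (contDiff_uncurry_flip hu) hmn)

lemma continuous_pdx (hu : ContDiff ℝ 1 (uncurry u)) : Continuous (uncurry (pdx u)) :=
  (contDiff_pdx (m := 0) hu (zero_add 1).le).continuous

lemma continuous_pdy (hu : ContDiff ℝ 1 (uncurry u)) : Continuous (uncurry (pdy u)) :=
  (contDiff_pdy (m := 0) hu (zero_add 1).le).continuous

lemma DblPeriodic.flip (hu : DblPeriodic u) : DblPeriodic (flip u) :=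
  fun x y => (hu y x).symm

lemma DblPeriodic.pdx (hu : DblPeriodic u) : DblPeriodic (pdx u) := by
  refine fun x y => ⟨?_, ?_⟩
  · have hshift : (fun s => u (s + 2 * π) y) = fun s => u s y := funext fun s => (hu s y).1
    calc deriv (fun s => u s y) (x + 2 * π)
        = deriv (fun s => u (s + 2 * π) y) x := (deriv_comp_add_const _ _ _).symm
      _ = deriv (fun s => u s y) x := by rw [hshift]
  · exact congrArg (deriv · x) (funext fun s => (hu s y).2)

lemma DblPeriodic.pdy (hu : DblPeriodic u) : DblPeriodic (pdy u) := by
  rw [pdy_eq_flip_pdx_flip]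
  exact hu.flip.pdx.flip

lemma pdx_pdy_eq_zero_iff_exists_const (hu : Differentiable ℝ (uncurry u)) :
    (∀ x y, pdx u x y = 0 ∧ pdy u x y = 0) ↔ ∃ α, ∀ x y, u x y = α := by
  constructor
  · intro hgrad
    refine ⟨u 0 0, fun x y => ?_⟩
    calc u x y = u 0 y :=
          is_const_of_deriv_eq_zero (differentiable_fst_of_uncurry hu y)
            (fun s => (hgrad s y).1) x 0
      _ = u 0 0 :=
          is_const_of_deriv_eq_zero (differentiable_snd_of_uncurry hu 0)
            (fun s => (hgrad 0 s).2) y 0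
  · rintro ⟨α, hα⟩ x y
    simp only [pdx, pdy, hα, deriv_const, and_self]

end PartialDerivatives

section Integration

open intervalIntegral (continuous_parametric_intervalIntegral_of_continuous')

variable {f g u : ℝ → ℝ → ℝ}

lemma integ2_add (hf : Continuous (uncurry f)) (hg : Continuous (uncurry g)) :
    integ2 (fun x y => f x y + g x y) = integ2 f + integ2 g := by
  have hinner (x : ℝ) : ∫ y in (0 : ℝ)..(2 * π), (f x y + g x y) =
      (∫ y in (0 : ℝ)..(2 * π), f x y) + ∫ y in (0 : ℝ)..(2 * π), g x y :=
    intervalIntegral.integral_add ((hf.uncurry_left x).intervalIntegrable _ _)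
      ((hg.uncurry_left x).intervalIntegrable _ _)
  simp only [integ2, hinner]
  exact intervalIntegral.integral_add
    ((continuous_parametric_intervalIntegral_of_continuous' hf _ _).intervalIntegrable _ _)
    ((continuous_parametric_intervalIntegral_of_continuous' hg _ _).intervalIntegrable _ _)

lemma integ2_flip (hf : Continuous (uncurry f)) : integ2 (flip f) = integ2 f := by
  refine (intervalIntegral_intervalIntegral_swap ?_).symm
  exact (hf.continuousOn.integrableOn_compact (isCompact_uIcc.prod isCompact_uIcc)).mono_set
    (Set.prod_mono Set.uIoc_subset_uIcc Set.uIoc_subset_uIcc)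

lemma integ2_pdy_eq_zero (hu : ContDiff ℝ 1 (uncurry u)) (hper : DblPeriodic u) :
    integ2 (pdy u) = 0 := by
  have hinner (x : ℝ) : ∫ y in (0 : ℝ)..(2 * π), pdy u x y = 0 := by
    have hdiff := differentiable_snd_of_uncurry (hu.differentiable one_ne_zero) x
    have hcont : Continuous (pdy u x) := (continuous_pdy hu).uncurry_left x
    calc ∫ y in (0 : ℝ)..(2 * π), pdy u x y
        = u x (2 * π) - u x 0 :=
          intervalIntegral.integral_eq_sub_of_hasDerivAt (fun y _ => (hdiff y).hasDerivAt)
            (hcont.intervalIntegrable _ _)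
      _ = 0 := by rw [sub_eq_zero, ← (hper x 0).2, zero_add]
  simp only [integ2, hinner, intervalIntegral.integral_zero]

lemma integ2_pdx_eq_zero (hu : ContDiff ℝ 1 (uncurry u)) (hper : DblPeriodic u) :
    integ2 (pdx u) = 0 := by
  rw [← integ2_flip (continuous_pdx hu)]
  exact integ2_pdy_eq_zero (contDiff_uncurry_flip hu) hper.flip

lemma integ2_div_eq_zero {F G : ℝ → ℝ → ℝ} (hF : ContDiff ℝ 1 (uncurry F))
    (hG : ContDiff ℝ 1 (uncurry G)) (hFper : DblPeriodic F) (hGper : DblPeriodic G) :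
    integ2 (fun x y => pdx F x y + pdy G x y) = 0 := by
  rw [integ2_add (continuous_pdx hF) (continuous_pdy hG),
    integ2_pdx_eq_zero hF hFper, integ2_pdy_eq_zero hG hGper, add_zero]

lemma integ2_nonneg (hf0 : ∀ x y, 0 ≤ f x y) : 0 ≤ integ2 f :=
  intervalIntegral.integral_nonneg two_pi_pos.le fun _ _ =>
    intervalIntegral.integral_nonneg two_pi_pos.le fun _ _ => hf0 _ _

lemma integ2_pos (hf : Continuous (uncurry f)) (hf0 : ∀ x y, 0 ≤ f x y) {x y : ℝ}
    (hx : x ∈ Set.Icc 0 (2 * π)) (hy : y ∈ Set.Icc 0 (2 * π)) (hxy : 0 < f x y) :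
    0 < integ2 f := by
  have hinner : 0 < ∫ y in (0 : ℝ)..(2 * π), f x y :=
    intervalIntegral.integral_pos two_pi_pos (hf.uncurry_left x).continuousOn
      (fun _ _ => hf0 _ _) ⟨y, hy, hxy⟩
  exact intervalIntegral.integral_pos two_pi_pos
    (continuous_parametric_intervalIntegral_of_continuous' hf _ _).continuousOn
    (fun _ _ => intervalIntegral.integral_nonneg two_pi_pos.le fun _ _ => hf0 _ _)
    ⟨x, hx, hinner⟩

lemma DblPeriodic.exists_mem_Icc (hf : DblPeriodic f) (x y : ℝ) :
    ∃ x' ∈ Set.Icc 0 (2 * π), ∃ y' ∈ Set.Icc 0 (2 * π), f x y = f x' y' := by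
  have hperx : Function.Periodic (f · y) (2 * π) := fun s => (hf s y).1
  obtain ⟨x', hx', hxx'⟩ := hperx.exists_mem_Ico₀ two_pi_pos x
  have hpery : Function.Periodic (f x') (2 * π) := fun s => (hf x' s).2
  obtain ⟨y', hy', hyy'⟩ := hpery.exists_mem_Ico₀ two_pi_pos y
  exact ⟨x', Set.Ico_subset_Icc_self hx', y', Set.Ico_subset_Icc_self hy', hxx'.trans hyy'⟩

lemma integ2_eq_zero_iff (hf : Continuous (uncurry f)) (hper : DblPeriodic f)
    (hf0 : ∀ x y, 0 ≤ f x y) : integ2 f = 0 ↔ ∀ x y, f x y = 0 := by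
  constructor
  · intro hint x y
    obtain ⟨x', hx', y', hy', hxy⟩ := hper.exists_mem_Icc x y
    by_contra hne
    exact (integ2_pos hf hf0 hx' hy' ((hf0 x' y').lt_of_ne' (hxy ▸ hne))).ne' hint
  · intro hzero
    simp only [integ2, hzero, intervalIntegral.integral_zero]

end Integration

section GroundState

/-- The quadratic form `∫ (|∇v|² + V v²)` of the Schrödinger operator `-Δ + V` on the torus
`(ℝ / 2πℤ)²`, with `v` and the potential `V` given as functions on the plane. -/
def schrodingerForm (V v : ℝ → ℝ → ℝ) : ℝ :=
  integ2 fun x y => pdx v x y ^ 2 + pdy v x y ^ 2 + V x y * v x y ^ 2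

lemma sq_deriv_mul {𝕜 : Type*} [NontriviallyNormedField 𝕜] {f g : 𝕜 → 𝕜} {t : 𝕜}
    (hf : DifferentiableAt 𝕜 f t) (hf' : DifferentiableAt 𝕜 (deriv f) t)
    (hg : DifferentiableAt 𝕜 g t) :
    deriv (fun s => f s * g s) t ^ 2 = f t ^ 2 * deriv g t ^ 2 +
      deriv (fun s => f s * g s ^ 2 * deriv f s) t - f t * g t ^ 2 * deriv (deriv f) t := by
  have hflux := ((hf.hasDerivAt.fun_mul (hg.hasDerivAt.fun_pow 2)).fun_mul hf'.hasDerivAt).deriv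
  rw [(hf.hasDerivAt.fun_mul hg.hasDerivAt).deriv, hflux]
  ring

variable {V φ w : ℝ → ℝ → ℝ}

lemma sq_grad_mul (hφ : ContDiff ℝ 2 (uncurry φ)) (hw : Differentiable ℝ (uncurry w)) (x y : ℝ) :
    pdx (fun x y => φ x y * w x y) x y ^ 2 + pdy (fun x y => φ x y * w x y) x y ^ 2 =
      φ x y ^ 2 * (pdx w x y ^ 2 + pdy w x y ^ 2) +
        (pdx (fun x y => φ x y * w x y ^ 2 * pdx φ x y) x y +
          pdy (fun x y => φ x y * w x y ^ 2 * pdy φ x y) x y) -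
        φ x y * w x y ^ 2 * lap φ x y := by
  have hφ₁ : Differentiable ℝ (uncurry φ) := hφ.differentiable two_ne_zero
  have hφx : Differentiable ℝ (uncurry (pdx φ)) :=
    (contDiff_pdx hφ one_add_one_eq_two.le).differentiable one_ne_zero
  have hφy : Differentiable ℝ (uncurry (pdy φ)) :=
    (contDiff_pdy hφ one_add_one_eq_two.le).differentiable one_ne_zero
  have hx := sq_deriv_mul (differentiable_fst_of_uncurry hφ₁ y x)
    (differentiable_fst_of_uncurry hφx y x) (differentiable_fst_of_uncurry hw y x)
  have hy := sq_deriv_mul (differentiable_snd_of_uncurry hφ₁ x y)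
    (differentiable_snd_of_uncurry hφy x y) (differentiable_snd_of_uncurry hw x y)
  simp only [pdx, pdy, lap]
  linear_combination hx + hy

lemma continuous_weighted_sq_grad (hφ : Continuous (uncurry φ)) (hw : ContDiff ℝ 1 (uncurry w)) :
    Continuous (uncurry fun x y => φ x y ^ 2 * (pdx w x y ^ 2 + pdy w x y ^ 2)) :=
  (hφ.pow 2).mul <| ((continuous_pdx hw).pow 2).add ((continuous_pdy hw).pow 2)

lemma schrodingerForm_mul (hφ : ContDiff ℝ 2 (uncurry φ)) (hφper : DblPeriodic φ)
    (hground : ∀ x y, lap φ x y = V x y * φ x y)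
    (hw : ContDiff ℝ 1 (uncurry w)) (hwper : DblPeriodic w) :
    schrodingerForm V (fun x y => φ x y * w x y) =
      integ2 fun x y => φ x y ^ 2 * (pdx w x y ^ 2 + pdy w x y ^ 2) := by
  have hφ₁ : ContDiff ℝ 1 (uncurry φ) := hφ.of_le one_le_two
  have hF : ContDiff ℝ 1 (uncurry fun x y => φ x y * w x y ^ 2 * pdx φ x y) :=
    (hφ₁.mul (hw.pow 2)).mul (contDiff_pdx hφ one_add_one_eq_two.le)
  have hG : ContDiff ℝ 1 (uncurry fun x y => φ x y * w x y ^ 2 * pdy φ x y) :=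
    (hφ₁.mul (hw.pow 2)).mul (contDiff_pdy hφ one_add_one_eq_two.le)
  have hFper : DblPeriodic fun x y => φ x y * w x y ^ 2 * pdx φ x y := fun x y => by
    simp only [hφper x y, hwper x y, hφper.pdx x y, and_self]
  have hGper : DblPeriodic fun x y => φ x y * w x y ^ 2 * pdy φ x y := fun x y => by
    simp only [hφper x y, hwper x y, hφper.pdy x y, and_self]
  have hintegrand (x y : ℝ) :
      pdx (fun x y => φ x y * w x y) x y ^ 2 + pdy (fun x y => φ x y * w x y) x y ^ 2 +
          V x y * (φ x y * w x y) ^ 2 =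
        φ x y ^ 2 * (pdx w x y ^ 2 + pdy w x y ^ 2) +
          (pdx (fun x y => φ x y * w x y ^ 2 * pdx φ x y) x y +
            pdy (fun x y => φ x y * w x y ^ 2 * pdy φ x y) x y) := by
    rw [sq_grad_mul hφ (hw.differentiable one_ne_zero), hground]
    ring
  have hdiv : Continuous (uncurry fun x y =>
      pdx (fun x y => φ x y * w x y ^ 2 * pdx φ x y) x y +
        pdy (fun x y => φ x y * w x y ^ 2 * pdy φ x y) x y) :=
    (continuous_pdx hF).add (continuous_pdy hG)
  simp only [schrodingerForm, hintegrand]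
  rw [integ2_add (continuous_weighted_sq_grad hφ.continuous hw) hdiv,
    integ2_div_eq_zero hF hG hFper hGper, add_zero]

lemma integ2_weighted_sq_grad_eq_zero_iff (hφ : Continuous (uncurry φ)) (hφper : DblPeriodic φ)
    (hφ0 : ∀ x y, φ x y ≠ 0) (hw : ContDiff ℝ 1 (uncurry w)) (hwper : DblPeriodic w) :
    integ2 (fun x y => φ x y ^ 2 * (pdx w x y ^ 2 + pdy w x y ^ 2)) = 0 ↔
      ∃ α, ∀ x y, w x y = α := by
  have hper : DblPeriodic fun x y => φ x y ^ 2 * (pdx w x y ^ 2 + pdy w x y ^ 2) := fun x y => by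
    simp only [hφper x y, hwper.pdx x y, hwper.pdy x y, and_self]
  have hgrad (x y : ℝ) : φ x y ^ 2 * (pdx w x y ^ 2 + pdy w x y ^ 2) = 0 ↔
      pdx w x y = 0 ∧ pdy w x y = 0 := by
    rw [mul_eq_zero_iff_left (pow_ne_zero 2 (hφ0 x y)),
      add_eq_zero_iff_of_nonneg (sq_nonneg _) (sq_nonneg _), sq_eq_zero_iff, sq_eq_zero_iff]
  rw [integ2_eq_zero_iff (continuous_weighted_sq_grad hφ hw) hper fun x y => by positivity,
    ← pdx_pdy_eq_zero_iff_exists_const (hw.differentiable one_ne_zero)]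
  simp only [hgrad]

theorem Ltwo_nonneg_kernel_general {v : ℝ → ℝ → ℝ} (hφ : ContDiff ℝ 2 (uncurry φ))
    (hφper : DblPeriodic φ) (hφ0 : ∀ x y, φ x y ≠ 0)
    (hground : ∀ x y, lap φ x y = V x y * φ x y)
    (hv : ContDiff ℝ 1 (uncurry v)) (hvper : DblPeriodic v) :
    0 ≤ schrodingerForm V v ∧
      (schrodingerForm V v = 0 ↔ ∃ α : ℝ, ∀ x y, v x y = α * φ x y) := by
  have hw : ContDiff ℝ 1 (uncurry fun x y => v x y / φ x y) :=
    hv.div (hφ.of_le one_le_two) fun p => hφ0 p.1 p.2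
  have hwper : DblPeriodic fun x y => v x y / φ x y := fun x y => by
    simp only [hφper x y, hvper x y, and_self]
  have hfactor : v = fun x y => φ x y * (v x y / φ x y) :=
    funext₂ fun x y => (mul_div_cancel₀ (v x y) (hφ0 x y)).symm
  have hform : schrodingerForm V v = integ2 fun x y => φ x y ^ 2 *
      (pdx (fun x y => v x y / φ x y) x y ^ 2 + pdy (fun x y => v x y / φ x y) x y ^ 2) :=
    (congrArg (schrodingerForm V) hfactor).trans (schrodingerForm_mul hφ hφper hground hw hwper)
  rw [hform, integ2_weighted_sq_grad_eq_zero_iff hφ.continuous hφper hφ0 hw hwper]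
  exact ⟨integ2_nonneg fun x y => by positivity, by simp only [div_eq_iff (hφ0 _ _)]⟩

end GroundState

/-- For a positive constrained minimizer φ of B_c (c > 2) solving −Δφ + cφ = φ², the
quadratic form of 𝓛₂ = −Δ + c − φ is nonnegative, vanishing exactly on multiples of φ. -/
theorem Ltwo_nonneg_kernel (c : ℝ) (hc : 2 < c) (φ : ℝ → ℝ → ℝ)
    (hs : Smooth2 φ) (hper : DblPeriodic φ) (hsym : SymFun φ)
    (hpos : ∀ x y : ℝ, 0 < φ x y)
    (heq : ∀ x y : ℝ, -(lap φ x y) + c * φ x y = (φ x y)^2)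
    (hmin : ∀ u : ℝ → ℝ → ℝ, Smooth2 u → DblPeriodic u → SymFun u →
      integ2 (fun x y => |u x y|^3) = integ2 (fun x y => (φ x y)^3) →
      Bc c φ ≤ Bc c u) :
    ∀ v : ℝ → ℝ → ℝ, Smooth2 v → DblPeriodic v → SymFun v →
      0 ≤ integ2 (fun x y =>
        (pdx v x y)^2 + (pdy v x y)^2 + c * (v x y)^2 - φ x y * (v x y)^2) ∧
      (integ2 (fun x y =>
        (pdx v x y)^2 + (pdy v x y)^2 + c * (v x y)^2 - φ x y * (v x y)^2) = 0 ↔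
        ∃ α : ℝ, ∀ x y : ℝ, v x y = α * φ x y) := by
  intro v hv hvper _
  have hground (x y : ℝ) : lap φ x y = (c - φ x y) * φ x y := by linear_combination -heq x y
  simpa only [schrodingerForm, sub_mul, ← add_sub_assoc] using
    Ltwo_nonneg_kernel_general (V := fun x y => c - φ x y) (contDiff_infty.1 hs 2) hper
      (fun x y => (hpos x y).ne') hground (contDiff_infty.1 hv 1) hvper
end
end

section
/- There exist a₀ > 0 and C > 0 such that for every a ∈ (0,a₀) there exist a real number c(a) and two smooth, doubly 2π-periodic functions φ₊, φ₋ : ℝ² → ℝ, each satisfying the evenness condition φ±(−x,−y) = φ±(x,y) for all (x,y) and each solving −Δφ± + c(a)φ± = φ±² on ℝ², such that for all (x,y) ∈ ℝ²: |φ₊(x,y) − [2 + a cos(x+y) + (a²/6)(1 + (1/2)cos(2x+2y)) + (a³/192)cos(3x+3y)]| ≤ C a⁴ and |φ₋(x,y) − [2 + a cos(x−y) + (a²/6)(1 + (1/2)cos(2x−2y)) + (a³/192)cos(3x−3y)]| ≤ C a⁴, and moreover |c(a) − (2 + (5/12)a²)| ≤ C a⁴. -/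
/-!
A wave depending on one diagonal variable, `φ(x, y) = g(x ± y)`, solves `-Δφ + c φ = φ²` as soon as
`-2 g'' + c g = g²`. The even `2π`-periodic solutions `g` are cnoidal waves, which have the explicit
form `g = A + 12 (log τ)''` with the theta function `τ(θ) = ∑ₙ q^{n²} e^{inθ}`.

The equation for `g` follows from Hirota's bilinear equation `(D⁴ + α D² + β) τ·τ = 0`, with
`ρ = √(α² - 12 β)`, `A = α + ρ` and `c = 2ρ`. Expanding `τ·τ` in exponentials and using
`n² + m² = ((n + m)² + (n - m)²) / 2`, the coefficient of `e^{iNθ}` depends on `N` only through a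
common factor and the parity of `N`; hence the bilinear equation amounts to two linear scalar
equations for `(α, β)`, which are solvable for small `q`.

The nome `q = -(a/24 - (a/24)³)` makes the first Fourier coefficient of `g` equal to `a` up to
`O(a⁵)`, and the expansions of `g` and `c` follow by truncating the theta series and the parity sums
modulo `O(q⁴)`, uniformly in `θ`.
-/

noncomputable section
open Real MeasureTheory Filter

/-- even under the simultaneous reflection (x,y) ↦ (−x,−y) -/
def EvenFun2 (u : ℝ → ℝ → ℝ) : Prop :=
  ∀ x y : ℝ, u (-x) (-y) = u x y

open Asymptotics Topology
open scoped ContDiff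

/-! ### Power series with prescribed exponents -/

section PowerSeries

variable {ι E : Type*} [NormedAddCommGroup E] [NormedSpace ℝ E] {q r : ℝ} {e : ι → ℕ}
  {b : ι → E} {B : ι → ℝ}

lemma norm_pow_smul_le (hq : |q| ≤ r) {x : E} {M : ℝ} (hx : ‖x‖ ≤ M) (n : ℕ) :
    ‖q ^ n • x‖ ≤ r ^ n * M := by
  have hr : 0 ≤ r := (abs_nonneg q).trans hq
  rw [norm_smul, norm_pow, Real.norm_eq_abs]
  gcongr

lemma summable_norm_pow_smul (hB : Summable fun i => r ^ e i * B i) (hb : ∀ i, ‖b i‖ ≤ B i)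
    (hq : |q| ≤ r) : Summable fun i => ‖q ^ e i • b i‖ :=
  hB.of_nonneg_of_le (fun _ => norm_nonneg _) fun i => norm_pow_smul_le hq (hb i) _

lemma norm_tsum_pow_smul_sub_sum_le [CompleteSpace E] (hr : 0 < r)
    (hB : Summable fun i => r ^ e i * B i) (hb : ∀ i, ‖b i‖ ≤ B i) (hq : |q| ≤ r)
    (s : Finset ι) {N : ℕ} (hs : ∀ i ∉ s, N ≤ e i) :
    ‖∑' i, q ^ e i • b i - ∑ i ∈ s, q ^ e i • b i‖
      ≤ (∑' i, r ^ e i * B i) / r ^ N * |q| ^ N := by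
  have hB0 : ∀ i, 0 ≤ B i := fun i => (norm_nonneg _).trans (hb i)
  have hterm : ∀ i : {i // i ∉ s}, ‖q ^ e i • b i‖ ≤ |q| ^ N / r ^ N * (r ^ e i * B i) := by
    rintro ⟨i, hi⟩
    obtain ⟨d, hd⟩ := Nat.exists_eq_add_of_le (hs i hi)
    calc ‖q ^ e i • b i‖ = |q| ^ N * ‖q ^ d • b i‖ := by
          rw [hd, pow_add, mul_smul, norm_smul, norm_pow, Real.norm_eq_abs]
      _ ≤ |q| ^ N * (r ^ d * B i) := by gcongr; exact norm_pow_smul_le hq (hb i) d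
      _ = |q| ^ N / r ^ N * (r ^ e i * B i) := by rw [hd, pow_add]; field_simp
  have hsum := (summable_norm_pow_smul hB hb hq).of_norm
  rw [← hsum.sum_add_tsum_subtype_compl s, add_sub_cancel_left]
  calc ‖∑' i : {i // i ∉ s}, q ^ e i • b i‖
      ≤ |q| ^ N / r ^ N * ∑' i : {i // i ∉ s}, r ^ e i * B i :=
        tsum_of_norm_bounded ((hB.subtype _).hasSum.mul_left _) hterm
    _ ≤ |q| ^ N / r ^ N * ∑' i, r ^ e i * B i := by
        gcongr
        exact hB.tsum_subtype_le _ {i | i ∉ s} fun i => mul_nonneg (by positivity) (hB0 i)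
    _ = (∑' i, r ^ e i * B i) / r ^ N * |q| ^ N := by ring

lemma isBigO_tsum_pow_smul_sub_sum [CompleteSpace E] {α : Type*} {l : Filter α} {q : α → ℝ}
    (hq : Tendsto q l (𝓝 0)) (hr : 0 < r) (hB : Summable fun i => r ^ e i * B i)
    {b : α → ι → E} (hb : ∀ a i, ‖b a i‖ ≤ B i) (s : Finset ι) {N : ℕ} (hs : ∀ i ∉ s, N ≤ e i) :
    (fun a => ∑' i, q a ^ e i • b a i - ∑ i ∈ s, q a ^ e i • b a i) =O[l] fun a => q a ^ N := by
  refine IsBigO.of_bound ((∑' i, r ^ e i * B i) / r ^ N) ?_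
  filter_upwards [hq.eventually (Metric.closedBall_mem_nhds 0 hr)] with a ha
  rw [norm_pow, Real.norm_eq_abs]
  exact norm_tsum_pow_smul_sub_sum_le hr hB (hb a) (by simpa using ha) s hs

end PowerSeries

lemma summable_int_pow_natAbs_mul {r : ℝ} (hr₀ : 0 < r) (hr₁ : r < 1) (k : ℕ) :
    Summable fun n : ℤ => r ^ n.natAbs * (2 * ((n.natAbs : ℝ) + 1)) ^ k := by
  have hnat : Summable fun n : ℕ => r ^ n * (2 * ((n : ℝ) + 1)) ^ k := by
    have hgeom := summable_pow_mul_geometric_of_norm_lt_one k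
      (show ‖r‖ < 1 by rwa [Real.norm_of_nonneg hr₀.le])
    refine (((summable_nat_add_iff 1).2 hgeom).mul_left (2 ^ k * r⁻¹)).congr fun n => ?_
    rw [mul_pow, pow_succ r]
    push_cast
    field_simp
  exact .of_nat_of_neg (by simpa using hnat) (by simpa using hnat)

lemma summable_int_pow_mul {r : ℝ} (hr₀ : 0 < r) (hr₁ : r < 1) {e : ℤ → ℕ}
    (he : ∀ n, n.natAbs ≤ e n + 1) (k : ℕ) :
    Summable fun n : ℤ => r ^ e n * (2 * ((n.natAbs : ℝ) + 1)) ^ k := by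
  refine ((summable_int_pow_natAbs_mul hr₀ hr₁ k).mul_left r⁻¹).of_nonneg_of_le
    (fun n => by positivity) fun n => ?_
  have hpow : r ^ e n ≤ r⁻¹ * r ^ n.natAbs := by
    rw [← div_eq_inv_mul, le_div_iff₀ hr₀, ← pow_succ]
    exact pow_le_pow_of_le_one hr₀.le hr₁.le (he n)
  rw [← mul_assoc]
  gcongr

/-! ### Approximation up to a small error -/

section IsApprox

variable {α : Type*} {l : Filter α} {e f g P S : α → ℝ}

lemma isBigO_one_comp_of_isCompact {X : Type*} [TopologicalSpace X] {u : α → X} {K : Set X}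
    (hK : IsCompact K) (hu : ∀ᶠ a in l, u a ∈ K) {F : X → ℝ} (hF : ContinuousOn F K) :
    (fun a => F (u a)) =O[l] fun _ => (1 : ℝ) := by
  obtain ⟨C, hC⟩ := hK.exists_bound_of_continuousOn hF
  refine IsBigO.of_bound C ?_
  filter_upwards [hu] with a ha
  simpa using hC _ ha

lemma abs_sqrt_sub_le {x s : ℝ} (hs : 1 ≤ s) : |√x - s| ≤ |x - s ^ 2| := by
  rcases le_total 0 x with hx | hx
  · have hfactor : x - s ^ 2 = (√x - s) * (√x + s) := by linear_combination -Real.sq_sqrt hx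
    rw [hfactor, abs_mul]
    refine le_mul_of_one_le_right (abs_nonneg _) ?_
    exact (by linarith [Real.sqrt_nonneg x] : 1 ≤ √x + s).trans (le_abs_self _)
  · rw [Real.sqrt_eq_zero_of_nonpos hx, zero_sub, abs_neg, abs_of_nonneg (by linarith),
      abs_of_nonpos (by nlinarith)]
    nlinarith

/-- `f = P + O(e)` along `l`, with a bounded main term `P`. Boundedness makes the notion
multiplicative. -/
structure IsApprox (l : Filter α) (e f P : α → ℝ) : Prop where
  isBigO_one : P =O[l] fun _ => (1 : ℝ)
  isBigO_sub : (fun a => f a - P a) =O[l] e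

namespace IsApprox

lemma const (c : ℝ) : IsApprox l e (fun _ => c) fun _ => c :=
  ⟨isBigO_const_const c one_ne_zero l, by simpa using isBigO_zero e l⟩

lemma of_tendsto {c : ℝ} (hP : Tendsto P l (𝓝 c)) (h : (fun a => f a - P a) =O[l] e) :
    IsApprox l e f P :=
  ⟨hP.isBigO_one ℝ, h⟩

lemma isBigO_one_left (he : e =O[l] fun _ => (1 : ℝ)) (hf : IsApprox l e f P) :
    f =O[l] fun _ => (1 : ℝ) := by
  simpa using (hf.isBigO_sub.trans he).add hf.isBigO_one

lemma tendsto {c : ℝ} (he : Tendsto e l (𝓝 0)) (hf : IsApprox l e f P)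
    (hP : Tendsto P l (𝓝 c)) : Tendsto f l (𝓝 c) := by
  simpa using (hf.isBigO_sub.trans_tendsto he).add hP

lemma add (hf : IsApprox l e f P) (hg : IsApprox l e g S) :
    IsApprox l e (fun a => f a + g a) (fun a => P a + S a) :=
  ⟨by simpa using hf.isBigO_one.add hg.isBigO_one,
    (hf.isBigO_sub.add hg.isBigO_sub).congr_left fun a => by ring⟩

lemma sub (hf : IsApprox l e f P) (hg : IsApprox l e g S) :
    IsApprox l e (fun a => f a - g a) (fun a => P a - S a) :=
  ⟨by simpa using hf.isBigO_one.sub hg.isBigO_one,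
    (hf.isBigO_sub.sub hg.isBigO_sub).congr_left fun a => by ring⟩

lemma const_mul (c : ℝ) (hf : IsApprox l e f P) :
    IsApprox l e (fun a => c * f a) (fun a => c * P a) :=
  ⟨hf.isBigO_one.const_mul_left c,
    (hf.isBigO_sub.const_mul_left c).congr_left fun a => by ring⟩

lemma mul (hf : IsApprox l e f P) (he : e =O[l] fun _ => (1 : ℝ)) (hg : IsApprox l e g S) :
    IsApprox l e (fun a => f a * g a) (fun a => P a * S a) := by
  refine ⟨by simpa using hf.isBigO_one.mul hg.isBigO_one, ?_⟩
  have hleft : (fun a => (f a - P a) * g a) =O[l] e := by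
    simpa using hf.isBigO_sub.mul (hg.isBigO_one_left he)
  have hright : (fun a => P a * (g a - S a)) =O[l] e := by
    simpa using hf.isBigO_one.mul hg.isBigO_sub
  exact (hleft.add hright).congr_left fun a => by ring

lemma pow (hf : IsApprox l e f P) (he : e =O[l] fun _ => (1 : ℝ)) (n : ℕ) :
    IsApprox l e (fun a => f a ^ n) (fun a => P a ^ n) := by
  induction n with
  | zero => simpa using IsApprox.const 1
  | succ n ih => simpa only [pow_succ] using ih.mul he hf

lemma congr_left (hf : IsApprox l e f P) (h : f =ᶠ[l] g) : IsApprox l e g P :=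
  ⟨hf.isBigO_one, hf.isBigO_sub.congr' (h.sub EventuallyEq.rfl) EventuallyEq.rfl⟩

lemma congr_right (hf : IsApprox l e f P) (h : ∀ a, P a = S a) : IsApprox l e f S :=
  funext h ▸ hf

lemma congr_right_add_mul {R : α → ℝ} (hf : IsApprox l e f P) (he : e =O[l] fun _ => (1 : ℝ))
    (hR : R =O[l] fun _ => (1 : ℝ)) (h : ∀ a, P a = S a + e a * R a) : IsApprox l e f S := by
  have hrem : (fun a => e a * R a) =O[l] e := by simpa using (isBigO_refl e l).mul hR
  exact ⟨(hf.isBigO_one.sub (hrem.trans he)).congr_left fun a => by rw [h]; ring,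
    (hf.isBigO_sub.add hrem).congr_left fun a => by rw [h]; ring⟩

lemma trans_isBigO {e' : α → ℝ} (hf : IsApprox l e f P) (he : e =O[l] e') :
    IsApprox l e' f P :=
  ⟨hf.isBigO_one, hf.isBigO_sub.trans he⟩

lemma div {c : ℝ} (hf : IsApprox l e f fun a => S a * P a) (hg : IsApprox l e g P)
    (hS : S =O[l] fun _ => (1 : ℝ)) (hgc : Tendsto g l (𝓝 c)) (hc : c ≠ 0) :
    IsApprox l e (fun a => f a / g a) S := by
  refine ⟨hS, ?_⟩
  have hnum : (fun a => f a - S a * g a) =O[l] e := by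
    refine (hf.isBigO_sub.sub (g := e) (f₂ := fun a => S a * (g a - P a)) ?_).congr_left
      fun a => by ring
    simpa using hS.mul hg.isBigO_sub
  have hquot : (fun a => (f a - S a * g a) * (g a)⁻¹) =O[l] e := by
    simpa using hnum.mul ((hgc.inv₀ hc).isBigO_one ℝ)
  refine hquot.congr' ?_ EventuallyEq.rfl
  filter_upwards [hgc.eventually_ne hc] with a ha
  field_simp

lemma sqrt (hf : IsApprox l e f fun a => S a ^ 2) (hS : S =O[l] fun _ => (1 : ℝ))
    (hS₁ : ∀ a, 1 ≤ S a) : IsApprox l e (fun a => √(f a)) S :=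
  ⟨hS, (isBigO_of_le _ fun a => abs_sqrt_sub_le (hS₁ a)).trans hf.isBigO_sub⟩

end IsApprox

end IsApprox

/-! ### Hirota's bilinear form of the wave equation -/

section HasDerivAtSucc

variable {𝕜 E : Type*} [NontriviallyNormedField 𝕜] [NormedAddCommGroup E] [NormedSpace 𝕜 E]
  {f : ℕ → 𝕜 → E}

lemma contDiff_infty_of_hasDerivAt_succ (h : ∀ k x, HasDerivAt (f k) (f (k + 1) x) x) (k : ℕ) :
    ContDiff 𝕜 ∞ (f k) := by
  refine contDiff_infty.2 fun n => ?_
  induction n generalizing k with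
  | zero => exact contDiff_zero.2 (continuous_iff_continuousAt.2 fun x => (h k x).continuousAt)
  | succ n ih =>
    push_cast
    refine contDiff_succ_iff_deriv.2 ⟨fun x => (h k x).differentiableAt, by simp, ?_⟩
    rw [deriv_eq (h k)]
    exact ih (k + 1)

lemma iteratedDeriv_eq_of_hasDerivAt_succ (h : ∀ k x, HasDerivAt (f k) (f (k + 1) x) x) (k : ℕ) :
    iteratedDeriv k (f 0) = f k := by
  induction k with
  | zero => exact iteratedDeriv_zero
  | succ k ih => rw [iteratedDeriv_succ, ih, deriv_eq (h k)]

end HasDerivAtSucc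

section Symmetry

variable {𝕜 E : Type*} [NontriviallyNormedField 𝕜] [NormedAddCommGroup E] [NormedSpace 𝕜 E]
  {𝕜' : Type*} [NontriviallyNormedField 𝕜'] [NormedAlgebra 𝕜 𝕜']

lemma periodic_deriv {f : 𝕜 → E} {T : 𝕜} (hf : Function.Periodic f T) :
    Function.Periodic (deriv f) T := fun x => by
  rw [← deriv_comp_add_const f T x, funext hf]

lemma odd_deriv {f : 𝕜 → E} (hf : Function.Even f) : Function.Odd (deriv f) := fun x => by
  have h := deriv_comp_neg f x
  rw [funext hf] at h
  rw [h, neg_neg]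

lemma even_deriv {f : 𝕜 → E} (hf : Function.Odd f) : Function.Even (deriv f) := fun x => by
  have h := deriv_comp_neg f x
  rw [funext hf, deriv.fun_neg] at h
  exact (neg_injective h).symm

lemma periodic_logDeriv {f : 𝕜 → 𝕜'} {T : 𝕜} (hf : Function.Periodic f T) :
    Function.Periodic (logDeriv f) T := fun x => by
  rw [logDeriv_apply, logDeriv_apply, periodic_deriv hf x, hf x]

lemma odd_logDeriv {f : 𝕜 → 𝕜'} (hf : Function.Even f) : Function.Odd (logDeriv f) := fun x => by
  rw [logDeriv_apply, logDeriv_apply, odd_deriv hf x, hf x, neg_div]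

end Symmetry

/-- The Hirota derivative `D^n τ·τ`, i.e. `(∂_θ - ∂_η)^n τ(θ) τ(η)` restricted to `η = θ`. -/
def hirota (n : ℕ) (τ : ℝ → ℝ) (θ : ℝ) : ℝ :=
  ∑ k ∈ Finset.range (n + 1),
    iteratedDeriv k τ θ * ((-1) ^ (n - k) * iteratedDeriv (n - k) τ θ) * n.choose k

section Hirota

variable {τ : ℝ → ℝ}

lemma hirota_zero (θ : ℝ) : hirota 0 τ θ = τ θ ^ 2 := by
  simp [hirota, sq]

lemma hirota_two (θ : ℝ) :
    hirota 2 τ θ = 2 * (iteratedDeriv 2 τ θ * τ θ - iteratedDeriv 1 τ θ ^ 2) := by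
  simp only [hirota, Finset.sum_range_succ, Finset.sum_range_zero, iteratedDeriv_zero,
    Nat.reduceAdd, Nat.reduceSub, Nat.choose]
  push_cast
  ring

lemma hirota_four (θ : ℝ) :
    hirota 4 τ θ = 2 * (iteratedDeriv 4 τ θ * τ θ
      - 4 * (iteratedDeriv 3 τ θ * iteratedDeriv 1 τ θ) + 3 * iteratedDeriv 2 τ θ ^ 2) := by
  simp only [hirota, Finset.sum_range_succ, Finset.sum_range_zero, iteratedDeriv_zero,
    Nat.reduceAdd, Nat.reduceSub, Nat.choose]
  push_cast
  ring

variable (hτ : ContDiff ℝ ∞ τ) (hτ₀ : ∀ θ, τ θ ≠ 0)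
include hτ hτ₀

lemma hasDerivAt_iteratedDeriv_div (k : ℕ) (θ : ℝ) :
    HasDerivAt (fun x => iteratedDeriv k τ x / τ x)
      (iteratedDeriv (k + 1) τ θ / τ θ
        - iteratedDeriv k τ θ / τ θ * (iteratedDeriv 1 τ θ / τ θ)) θ := by
  have hk : HasDerivAt (iteratedDeriv k τ) (iteratedDeriv (k + 1) τ θ) θ := by
    rw [iteratedDeriv_succ]
    have hlt : (k : ℕ∞) < ⊤ := ENat.natCast_lt_top k
    exact (hτ.differentiable_iteratedDeriv k (by exact_mod_cast hlt) θ).hasDerivAt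
  have h0 : HasDerivAt τ (iteratedDeriv 1 τ θ) θ := by
    rw [iteratedDeriv_one]
    exact (hτ.differentiable (by simp) θ).hasDerivAt
  have := hτ₀ θ
  refine (hk.fun_div h0 this).congr_deriv ?_
  field_simp

lemma deriv_logDeriv :
    deriv (logDeriv τ) = fun θ =>
      iteratedDeriv 2 τ θ / τ θ - (iteratedDeriv 1 τ θ / τ θ) ^ 2 := by
  have hlog : logDeriv τ = fun x => iteratedDeriv 1 τ x / τ x := by
    ext x
    rw [logDeriv_apply, iteratedDeriv_one]
  rw [hlog]
  ext θ
  rw [(hasDerivAt_iteratedDeriv_div hτ hτ₀ 1 θ).deriv]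
  ring

lemma deriv_logDeriv_eq_hirota (θ : ℝ) :
    deriv (logDeriv τ) θ = hirota 2 τ θ / (2 * hirota 0 τ θ) := by
  have := hτ₀ θ
  rw [deriv_logDeriv hτ hτ₀, hirota_two, hirota_zero]
  field_simp

lemma deriv_deriv_deriv_logDeriv_eq_hirota (θ : ℝ) :
    deriv (deriv (deriv (logDeriv τ))) θ + 6 * deriv (logDeriv τ) θ ^ 2
      = hirota 4 τ θ / (2 * hirota 0 τ θ) := by
  have hr := hasDerivAt_iteratedDeriv_div hτ hτ₀
  have hfirst : deriv (deriv (logDeriv τ)) = fun x =>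
      iteratedDeriv 3 τ x / τ x
        - 3 * (iteratedDeriv 1 τ x / τ x * (iteratedDeriv 2 τ x / τ x))
        + 2 * (iteratedDeriv 1 τ x / τ x) ^ 3 := by
    rw [deriv_logDeriv hτ hτ₀]
    ext x
    rw [((hr 2 x).fun_sub ((hr 1 x).fun_pow 2)).deriv]
    ring
  have := hτ₀ θ
  rw [hfirst, deriv_logDeriv hτ hτ₀,
    (((hr 3 θ).fun_sub (((hr 1 θ).fun_mul (hr 2 θ)).const_mul 3)).fun_add
      (((hr 1 θ).fun_pow 3).const_mul 2)).deriv, hirota_four, hirota_zero]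
  simp only [Nat.cast_ofNat, Nat.reduceAdd, Nat.reduceSub]
  field_simp
  ring

lemma contDiff_deriv_logDeriv : ContDiff ℝ ∞ (deriv (logDeriv τ)) := by
  have hlog : ContDiff ℝ ∞ (logDeriv τ) := (contDiff_infty_iff_deriv.1 hτ).2.div hτ hτ₀
  exact (contDiff_infty_iff_deriv.1 hlog).2

end Hirota

/-- `g` is an even `2π`-periodic solution of `-2 g'' + c g = g²`, the equation satisfied by the
profile of a wave `g (x ± y)` of frequency `c`. -/
structure IsWaveProfile (c : ℝ) (g : ℝ → ℝ) : Prop where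
  contDiff : ContDiff ℝ ∞ g
  periodic : Function.Periodic g (2 * π)
  even : Function.Even g
  ode : ∀ θ, -(2 * deriv (deriv g) θ) + c * g θ = g θ ^ 2

lemma isWaveProfile_of_hirota {τ : ℝ → ℝ} {α β ρ : ℝ} (hτ : ContDiff ℝ ∞ τ)
    (hτ₀ : ∀ θ, τ θ ≠ 0) (hper : Function.Periodic τ (2 * π)) (heven : Function.Even τ)
    (hbilinear : ∀ θ, hirota 4 τ θ + α * hirota 2 τ θ + β * hirota 0 τ θ = 0)
    (hρ : ρ ^ 2 = α ^ 2 - 12 * β) :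
    IsWaveProfile (2 * ρ) fun θ => α + ρ + 12 * deriv (logDeriv τ) θ where
  contDiff := contDiff_const.add (contDiff_const.mul (contDiff_deriv_logDeriv hτ hτ₀))
  periodic θ := by simp only [periodic_deriv (periodic_logDeriv hper) θ]
  even θ := by simp only [even_deriv (odd_logDeriv heven) θ]
  ode θ := by
    set w := deriv (logDeriv τ)
    have hsecond : deriv (deriv fun x => α + ρ + 12 * w x) θ = 12 * deriv (deriv w) θ := by
      simp only [deriv_const_add', deriv_const_mul_field']
    have hdiv : hirota 4 τ θ / (2 * hirota 0 τ θ) + α * (hirota 2 τ θ / (2 * hirota 0 τ θ))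
        + β / 2 = 0 := by
      have h0 : hirota 0 τ θ ≠ 0 := by rw [hirota_zero]; exact pow_ne_zero 2 (hτ₀ θ)
      field_simp
      linear_combination hbilinear θ
    have hweier : deriv (deriv w) θ + 6 * w θ ^ 2 + α * w θ + β / 2 = 0 := by
      rwa [← deriv_deriv_deriv_logDeriv_eq_hirota hτ hτ₀, ← deriv_logDeriv_eq_hirota hτ hτ₀] at hdiv
    rw [hsecond]
    linear_combination -24 * hweier + hρ

/-! ### Theta functions -/

/-- The `k`-th derivative of `θ ↦ e^{inθ}`. -/
def fourierMode (k : ℕ) (n : ℤ) (θ : ℝ) : ℂ :=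
  (n * Complex.I) ^ k * Complex.exp (n * θ * Complex.I)

/-- The `k`-th derivative of the theta function `∑ₙ q^{n²} e^{inθ}`. Keeping only the real parts of
the terms does not change the sum, see `hasSum_thetaSeries`. -/
def thetaSeries (q : ℝ) (k : ℕ) (θ : ℝ) : ℝ :=
  ∑' n : ℤ, q ^ n.natAbs ^ 2 • (fourierMode k n θ).re

/-- The theta function `∑ₙ q^{n²} e^{inθ}` of nome `q`, for real `θ`. -/
def theta (q : ℝ) : ℝ → ℝ := thetaSeries q 0

lemma norm_fourierMode_le (k : ℕ) (n : ℤ) (θ : ℝ) :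
    ‖fourierMode k n θ‖ ≤ (2 * ((n.natAbs : ℝ) + 1)) ^ k := by
  have hexp : ‖Complex.exp (n * θ * Complex.I)‖ = 1 := by
    exact_mod_cast Complex.norm_exp_ofReal_mul_I (n * θ)
  rw [fourierMode, norm_mul, hexp, mul_one, norm_pow, norm_mul, Complex.norm_I, mul_one,
    Complex.norm_intCast, ← Int.cast_abs, Int.abs_eq_natAbs, Int.cast_natCast]
  gcongr
  linarith [Nat.cast_nonneg (α := ℝ) n.natAbs]

lemma abs_re_fourierMode_le (k : ℕ) (n : ℤ) (θ : ℝ) :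
    ‖(fourierMode k n θ).re‖ ≤ (2 * ((n.natAbs : ℝ) + 1)) ^ k :=
  (Complex.abs_re_le_norm _).trans (norm_fourierMode_le k n θ)

lemma isBigO_one_re_fourierMode {ι : Type*} {l : Filter ι} (k : ℕ) (n : ℤ) (θ : ι → ℝ) :
    (fun i => (fourierMode k n (θ i)).re) =O[l] fun _ => (1 : ℝ) :=
  .of_bound _ (.of_forall fun i => by simpa using abs_re_fourierMode_le k n (θ i))

lemma re_fourierMode_zero_one (θ : ℝ) : (fourierMode 0 1 θ).re = Real.cos θ := by
  simp [fourierMode, Complex.exp_ofReal_mul_I_re]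

lemma re_fourierMode_one_one (θ : ℝ) : (fourierMode 1 1 θ).re = -Real.sin θ := by
  simp [fourierMode, Complex.exp_ofReal_mul_I_im]

lemma re_fourierMode_two_one (θ : ℝ) : (fourierMode 2 1 θ).re = -Real.cos θ := by
  simp [fourierMode, Complex.exp_ofReal_mul_I_re]

lemma hasDerivAt_fourierMode (k : ℕ) (n : ℤ) (θ : ℝ) :
    HasDerivAt (fourierMode k n) (fourierMode (k + 1) n θ) θ := by
  have hlin : HasDerivAt (fun x : ℝ => (n : ℂ) * x * Complex.I) (n * Complex.I) θ := by
    simpa using ((hasDerivAt_id θ).ofReal_comp.const_mul (n : ℂ)).mul_const Complex.I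
  refine (hlin.cexp.const_mul ((n * Complex.I) ^ k)).congr_deriv ?_
  rw [fourierMode]
  ring

lemma re_fourierMode_freq_zero (k : ℕ) (θ : ℝ) : (fourierMode k 0 θ).re = 0 ^ k := by
  cases k <;> simp [fourierMode]

lemma fourierMode_freq_neg (k : ℕ) (n : ℤ) (θ : ℝ) :
    fourierMode k (-n) θ = (starRingEnd ℂ) (fourierMode k n θ) := by
  simp [fourierMode, ← Complex.exp_conj]

lemma fourierMode_mul (j k : ℕ) (n m : ℤ) (θ : ℝ) :
    fourierMode j n θ * fourierMode k m θ
      = (n * Complex.I) ^ j * (m * Complex.I) ^ k * fourierMode 0 (n + m) θ := by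
  have hexp : Complex.exp (((n + m : ℤ) : ℂ) * θ * Complex.I)
      = Complex.exp (n * θ * Complex.I) * Complex.exp (m * θ * Complex.I) := by
    rw [← Complex.exp_add]
    push_cast
    ring_nf
  rw [fourierMode, fourierMode, fourierMode, hexp]
  ring

lemma fourierMode_zero_neg_right (n : ℤ) (θ : ℝ) : fourierMode 0 n (-θ) = fourierMode 0 (-n) θ := by
  simp [fourierMode]

lemma fourierMode_add_two_pi (k : ℕ) (n : ℤ) (θ : ℝ) :
    fourierMode k n (θ + 2 * π) = fourierMode k n θ := by
  rw [fourierMode, fourierMode]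
  congr 1
  refine Complex.exp_eq_exp_iff_exists_int.2 ⟨n, ?_⟩
  push_cast
  ring

lemma natAbs_le_natAbs_sq_add_one (n : ℤ) : n.natAbs ≤ n.natAbs ^ 2 + 1 := by nlinarith

lemma exists_abs_le_lt_one {q : ℝ} (hq : |q| < 1) : ∃ r, 0 < r ∧ r < 1 ∧ |q| ≤ r := by
  obtain ⟨r, hqr, hr⟩ := exists_between hq
  exact ⟨r, (abs_nonneg q).trans_lt hqr, hr, hqr.le⟩

section Theta

variable {q : ℝ}

lemma summable_norm_thetaSeries (hq : |q| < 1) (k : ℕ) (θ : ℝ) :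
    Summable fun n : ℤ => ‖q ^ n.natAbs ^ 2 • fourierMode k n θ‖ := by
  obtain ⟨r, hr₀, hr₁, hqr⟩ := exists_abs_le_lt_one hq
  exact summable_norm_pow_smul (summable_int_pow_mul hr₀ hr₁ natAbs_le_natAbs_sq_add_one k)
    (norm_fourierMode_le k · θ) hqr

lemma hasDerivAt_thetaSeries (hq : |q| < 1) (k : ℕ) (θ : ℝ) :
    HasDerivAt (thetaSeries q k) (thetaSeries q (k + 1) θ) θ := by
  obtain ⟨r, hr₀, hr₁, hqr⟩ := exists_abs_le_lt_one hq
  have hB := summable_int_pow_mul hr₀ hr₁ natAbs_le_natAbs_sq_add_one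
  have hterm (n : ℤ) (x : ℝ) : HasDerivAt (fun y => q ^ n.natAbs ^ 2 • (fourierMode k n y).re)
      (q ^ n.natAbs ^ 2 • (fourierMode (k + 1) n x).re) x :=
    (Complex.reCLM.hasFDerivAt.comp_hasDerivAt x (hasDerivAt_fourierMode k n x)).const_smul
      (q ^ n.natAbs ^ 2)
  have hsum := (summable_norm_pow_smul (hB k) (abs_re_fourierMode_le k · 0) hqr).of_norm
  exact hasDerivAt_tsum (hB (k + 1)) hterm
    (fun n x => norm_pow_smul_le hqr (abs_re_fourierMode_le (k + 1) n x) _) hsum θ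

lemma contDiff_theta (hq : |q| < 1) : ContDiff ℝ ∞ (theta q) :=
  contDiff_infty_of_hasDerivAt_succ (hasDerivAt_thetaSeries hq) 0

lemma iteratedDeriv_theta (hq : |q| < 1) (k : ℕ) : iteratedDeriv k (theta q) = thetaSeries q k :=
  iteratedDeriv_eq_of_hasDerivAt_succ (hasDerivAt_thetaSeries hq) k

lemma periodic_theta : Function.Periodic (theta q) (2 * π) := fun θ => by
  simp only [theta, thetaSeries, fourierMode_add_two_pi]

lemma even_theta : Function.Even (theta q) := fun θ => by
  simp only [theta, thetaSeries, fourierMode_zero_neg_right, fourierMode_freq_neg, Complex.conj_re]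

lemma hasSum_thetaSeries (hq : |q| < 1) (k : ℕ) (θ : ℝ) :
    HasSum (fun n : ℤ => q ^ n.natAbs ^ 2 • fourierMode k n θ) (thetaSeries q k θ : ℂ) := by
  have hsum := (summable_norm_thetaSeries hq k θ).of_norm
  set t := ∑' n : ℤ, q ^ n.natAbs ^ 2 • fourierMode k n θ with ht
  have hreal : (starRingEnd ℂ) t = t := by
    rw [ht, Complex.conj_tsum, ← (Equiv.neg ℤ).tsum_eq]
    refine tsum_congr fun n => ?_
    simp [fourierMode_freq_neg]
  have hre : t.re = thetaSeries q k θ := by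
    rw [ht, Complex.re_tsum hsum, thetaSeries]
    simp only [Complex.smul_re]
  rw [← hre, Complex.conj_eq_iff_re.1 hreal]
  exact hsum.hasSum

end Theta

/-! ### Separation of the bilinear equation by parity -/

/-- The number `r (r + δ)`, a natural number for the two parities `δ = 0, 1`. -/
def pronic (δ r : ℤ) : ℕ := (r * (r + δ)).toNat

/-- The moment `∑ q^{2 r (r + δ)} (2r + δ)^k` over the integers `2r + δ` of parity `δ`. -/
def paritySum (q : ℝ) (δ : ℤ) (k : ℕ) : ℝ :=
  ∑' r : ℤ, q ^ (2 * pronic δ r) • ((2 * r + δ : ℤ) : ℝ) ^ k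

/-- The pairs `(n, m)` indexed by `N = n + m` and by the `r` with `n - m = 2r + N % 2`. -/
def sumDiffEquiv : ℤ × ℤ ≃ ℤ × ℤ where
  toFun p := (p.1 / 2 + p.1 % 2 + p.2, p.1 / 2 - p.2)
  invFun p := (p.1 + p.2, (p.1 + p.2) / 2 - p.2)
  left_inv p := by ext <;> simp only <;> omega
  right_inv p := by ext <;> simp only <;> omega

section Parity

variable {q : ℝ} {δ : ℤ}

lemma natCast_pronic (hδ : δ = 0 ∨ δ = 1) (r : ℤ) : (pronic δ r : ℤ) = r * (r + δ) := by
  refine Int.toNat_of_nonneg ?_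
  rcases hδ with rfl | rfl <;> nlinarith [sq_nonneg r, Int.le_self_sq (-r)]

lemma natAbs_le_two_mul_pronic_add_one (hδ : δ = 0 ∨ δ = 1) (r : ℤ) :
    r.natAbs ≤ 2 * pronic δ r + 1 := by
  zify
  rw [natCast_pronic hδ]
  rcases hδ with rfl | rfl <;> rcases abs_cases r with ⟨h, _⟩ | ⟨h, _⟩ <;> rw [h] <;>
    nlinarith [sq_nonneg r, Int.le_self_sq r, Int.le_self_sq (-r), sq_nonneg (r + 1)]

lemma norm_two_mul_add_pow_le (hδ : δ = 0 ∨ δ = 1) (k : ℕ) (r : ℤ) :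
    ‖((2 * r + δ : ℤ) : ℝ) ^ k‖ ≤ (2 * ((r.natAbs : ℝ) + 1)) ^ k := by
  have hint : (2 * r + δ).natAbs ≤ 2 * (r.natAbs + 1) := by omega
  rw [norm_pow, Real.norm_eq_abs, ← Int.cast_abs, Int.abs_eq_natAbs, Int.cast_natCast]
  gcongr
  exact_mod_cast hint

lemma hasSum_paritySum (hq : |q| < 1) (hδ : δ = 0 ∨ δ = 1) (k : ℕ) :
    HasSum (fun r : ℤ => q ^ (2 * pronic δ r) • ((2 * r + δ : ℤ) : ℝ) ^ k) (paritySum q δ k) := by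
  obtain ⟨r, hr₀, hr₁, hqr⟩ := exists_abs_le_lt_one hq
  have hB := summable_int_pow_mul hr₀ hr₁ (natAbs_le_two_mul_pronic_add_one hδ) k
  exact (summable_norm_pow_smul hB (norm_two_mul_add_pow_le hδ k) hqr).of_norm.hasSum

lemma hasSum_thetaSeries_mul (hq : |q| < 1) (j k : ℕ) (θ : ℝ) :
    HasSum (fun p : ℤ × ℤ => (q : ℂ) ^ (p.1.natAbs ^ 2 + p.2.natAbs ^ 2) *
      ((p.1 * Complex.I) ^ j * (p.2 * Complex.I) ^ k * fourierMode 0 (p.1 + p.2) θ))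
      (thetaSeries q j θ * thetaSeries q k θ : ℝ) := by
  have hsummable := summable_mul_of_summable_norm (summable_norm_thetaSeries hq j θ)
    (summable_norm_thetaSeries hq k θ)
  have hmul := (hasSum_thetaSeries hq j θ).mul (hasSum_thetaSeries hq k θ) hsummable
  rw [Complex.ofReal_mul]
  refine hmul.congr_fun fun p => ?_
  rw [← fourierMode_mul, Complex.real_smul, Complex.real_smul]
  push_cast
  ring

lemma hasSum_prod_hirota_theta (hq : |q| < 1) (k : ℕ) (θ : ℝ) :
    HasSum (fun p : ℤ × ℤ => (q : ℂ) ^ (p.1.natAbs ^ 2 + p.2.natAbs ^ 2) *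
      ((((p.1 - p.2 : ℤ) : ℂ) * Complex.I) ^ k * fourierMode 0 (p.1 + p.2) θ))
      (hirota k (theta q) θ) := by
  have hsum := hasSum_sum fun j (_ : j ∈ Finset.range (k + 1)) =>
    (hasSum_thetaSeries_mul hq j (k - j) θ).mul_right ((-1) ^ (k - j) * (k.choose j : ℂ))
  have hhirota : (hirota k (theta q) θ : ℂ) = ∑ j ∈ Finset.range (k + 1),
      ((thetaSeries q j θ * thetaSeries q (k - j) θ : ℝ) : ℂ)
        * ((-1) ^ (k - j) * (k.choose j : ℂ)) := by
    simp only [hirota, iteratedDeriv_theta hq]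
    push_cast
    exact Finset.sum_congr rfl fun j _ => by ring
  rw [hhirota]
  refine hsum.congr_fun fun p => ?_
  rw [Int.cast_sub, sub_mul, sub_eq_add_neg, add_pow, Finset.sum_mul, Finset.mul_sum]
  refine Finset.sum_congr rfl fun j _ => ?_
  rw [neg_pow]
  ring

lemma natAbs_sq_add_natAbs_sq_sumDiffEquiv (N r : ℤ) :
    (sumDiffEquiv (N, r)).1.natAbs ^ 2 + (sumDiffEquiv (N, r)).2.natAbs ^ 2
      = 2 * pronic (N % 2) (N / 2) + (N % 2).natAbs ^ 2 + 2 * pronic (N % 2) r := by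
  have hpronic := natCast_pronic N.emod_two_eq_zero_or_one
  zify
  simp only [sq_abs, hpronic, sumDiffEquiv, Equiv.coe_fn_mk]
  ring

lemma hirota_term_sumDiffEquiv (k : ℕ) (θ : ℝ) (N r : ℤ) :
    (q : ℂ) ^ ((sumDiffEquiv (N, r)).1.natAbs ^ 2 + (sumDiffEquiv (N, r)).2.natAbs ^ 2) *
        (((((sumDiffEquiv (N, r)).1 - (sumDiffEquiv (N, r)).2 : ℤ) : ℂ) * Complex.I) ^ k
          * fourierMode 0 ((sumDiffEquiv (N, r)).1 + (sumDiffEquiv (N, r)).2) θ)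
      = (q : ℂ) ^ (2 * pronic (N % 2) (N / 2) + (N % 2).natAbs ^ 2) * Complex.I ^ k
        * fourierMode 0 N θ
        * ((q ^ (2 * pronic (N % 2) r) • ((2 * r + N % 2 : ℤ) : ℝ) ^ k : ℝ) : ℂ) := by
  have hsum : (sumDiffEquiv (N, r)).1 + (sumDiffEquiv (N, r)).2 = N := by
    simp only [sumDiffEquiv, Equiv.coe_fn_mk]
    omega
  have hdiff : (sumDiffEquiv (N, r)).1 - (sumDiffEquiv (N, r)).2 = 2 * r + N % 2 := by
    simp only [sumDiffEquiv, Equiv.coe_fn_mk]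
    ring
  rw [natAbs_sq_add_natAbs_sq_sumDiffEquiv, hsum, hdiff, smul_eq_mul, Complex.ofReal_mul,
    Complex.ofReal_pow, Complex.ofReal_pow, Complex.ofReal_intCast]
  ring

lemma hasSum_hirota_theta (hq : |q| < 1) (k : ℕ) (θ : ℝ) :
    HasSum (fun N : ℤ => (q : ℂ) ^ (2 * pronic (N % 2) (N / 2) + (N % 2).natAbs ^ 2)
      * Complex.I ^ k * fourierMode 0 N θ * paritySum q (N % 2) k) (hirota k (theta q) θ) := by
  have hpairs := sumDiffEquiv.hasSum_iff.2 (hasSum_prod_hirota_theta hq k θ)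
  refine hpairs.prod_fiberwise fun N => ?_
  simp only [Function.comp_apply, hirota_term_sumDiffEquiv]
  exact (Complex.hasSum_ofReal.2 (hasSum_paritySum hq N.emod_two_eq_zero_or_one k)).mul_left _

lemma hirota_theta_eq_zero (hq : |q| < 1) {α β : ℝ}
    (hparity : ∀ δ : ℤ, δ = 0 ∨ δ = 1 →
      paritySum q δ 4 - α * paritySum q δ 2 + β * paritySum q δ 0 = 0) (θ : ℝ) :
    hirota 4 (theta q) θ + α * hirota 2 (theta q) θ + β * hirota 0 (theta q) θ = 0 := by
  have hsum := ((hasSum_hirota_theta hq 4 θ).add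
    ((hasSum_hirota_theta hq 2 θ).mul_left (α : ℂ))).add
    ((hasSum_hirota_theta hq 0 θ).mul_left (β : ℂ))
  have hzero (N : ℤ) : ((paritySum q (N % 2) 4 : ℝ) : ℂ) - α * paritySum q (N % 2) 2
      + β * paritySum q (N % 2) 0 = 0 := by
    exact_mod_cast hparity _ N.emod_two_eq_zero_or_one
  have hterms := hsum.congr_fun (g := 0) fun N => by
    rw [Complex.I_pow_four, Complex.I_sq, pow_zero, Pi.zero_apply]
    linear_combination -(q : ℂ) ^ (2 * pronic (N % 2) (N / 2) + (N % 2).natAbs ^ 2)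
      * fourierMode 0 N θ * hzero N
  exact_mod_cast hterms.unique hasSum_zero

end Parity

/-! ### The waves and their expansions in the nome -/

/-- The determinant of the two parity equations, linear in `(α, β)`, to which the bilinear
equation for `theta q` reduces. -/
def bilinearDet (q : ℝ) : ℝ :=
  paritySum q 0 0 * paritySum q 1 2 - paritySum q 0 2 * paritySum q 1 0

/-- The coefficient `α` of `(D⁴ + α D² + β) τ·τ = 0`, by Cramer's rule. -/
def bilinearAlpha (q : ℝ) : ℝ :=
  (paritySum q 0 0 * paritySum q 1 4 - paritySum q 0 4 * paritySum q 1 0) / bilinearDet q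

/-- The coefficient `β` of `(D⁴ + α D² + β) τ·τ = 0`, by Cramer's rule. -/
def bilinearBeta (q : ℝ) : ℝ :=
  (paritySum q 0 2 * paritySum q 1 4 - paritySum q 0 4 * paritySum q 1 2) / bilinearDet q

/-- Half the frequency of the cnoidal wave of nome `q`. -/
def waveRoot (q : ℝ) : ℝ := √(bilinearAlpha q ^ 2 - 12 * bilinearBeta q)

/-- The profile `A + 12 (log τ)''` of the cnoidal wave of nome `q`. -/
def waveProfile (q θ : ℝ) : ℝ :=
  bilinearAlpha q + waveRoot q + 12 * deriv (logDeriv (theta q)) θ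

lemma paritySum_linear_eq_zero {q : ℝ} (hdet : bilinearDet q ≠ 0) (δ : ℤ) (hδ : δ = 0 ∨ δ = 1) :
    paritySum q δ 4 - bilinearAlpha q * paritySum q δ 2 + bilinearBeta q * paritySum q δ 0 = 0 := by
  rw [bilinearAlpha, bilinearBeta]
  field_simp
  rw [bilinearDet]
  rcases hδ with rfl | rfl <;> ring

lemma isWaveProfile_waveProfile {q : ℝ} (hq : |q| < 1) (hdet : bilinearDet q ≠ 0)
    (htheta : ∀ θ, theta q θ ≠ 0) (hrad : 0 ≤ bilinearAlpha q ^ 2 - 12 * bilinearBeta q) :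
    IsWaveProfile (2 * waveRoot q) (waveProfile q) :=
  isWaveProfile_of_hirota (contDiff_theta hq) htheta periodic_theta even_theta
    (hirota_theta_eq_zero hq (paritySum_linear_eq_zero hdet)) (Real.sq_sqrt hrad)

section Expansion

variable {ι : Type*} {l : Filter ι} {q : ι → ℝ}

lemma tendsto_pow_four (hq : Tendsto q l (𝓝 0)) : Tendsto (fun i => q i ^ 4) l (𝓝 0) := by
  simpa using hq.pow 4

lemma isBigO_pow_four_one (hq : Tendsto q l (𝓝 0)) :
    (fun i => q i ^ 4) =O[l] fun _ => (1 : ℝ) :=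
  (tendsto_pow_four hq).isBigO_one ℝ

lemma isBigO_one_cos (hq : Tendsto q l (𝓝 0)) (θ : ι → ℝ) {F : ℝ × ℝ → ℝ} (hF : Continuous F) :
    (fun i => F (q i, Real.cos (θ i))) =O[l] fun _ => (1 : ℝ) := by
  refine isBigO_one_comp_of_isCompact (K := Set.Icc (-1) 1) isCompact_Icc ?_ hF.continuousOn
  filter_upwards [hq.eventually (Icc_mem_nhds neg_one_lt_zero one_pos)] with i hi
  exact ⟨⟨hi.1, Real.neg_one_le_cos _⟩, ⟨hi.2, Real.cos_le_one _⟩⟩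

lemma isApprox_paritySum_zero (hq : Tendsto q l (𝓝 0)) (k : ℕ) :
    IsApprox l (fun i => q i ^ 4) (fun i => paritySum (q i) 0 k)
      fun i => 0 ^ k + q i ^ 2 * (2 ^ k + (-2) ^ k) := by
  have hδ : (0 : ℤ) = 0 ∨ (0 : ℤ) = 1 := .inl rfl
  refine .of_tendsto (tendsto_const_nhds.add ((hq.pow 2).mul_const _)) ?_
  refine (isBigO_tsum_pow_smul_sub_sum hq one_half_pos
    (summable_int_pow_mul one_half_pos one_half_lt_one (natAbs_le_two_mul_pronic_add_one hδ) k)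
    (fun _ => norm_two_mul_add_pow_le hδ k) {0, 1, -1} fun r hr => ?_).congr_left fun i => ?_
  · simp only [Finset.mem_insert, Finset.mem_singleton, not_or] at hr
    zify
    rw [natCast_pronic hδ]
    rcases (by omega : 2 ≤ r ∨ r ≤ -2) with h | h <;> nlinarith
  · norm_num [paritySum, pronic, mul_add]

lemma isApprox_paritySum_one (hq : Tendsto q l (𝓝 0)) (k : ℕ) :
    IsApprox l (fun i => q i ^ 4) (fun i => paritySum (q i) 1 k) fun _ => 1 + (-1) ^ k := by
  have hδ : (1 : ℤ) = 0 ∨ (1 : ℤ) = 1 := .inr rfl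
  refine .of_tendsto tendsto_const_nhds ?_
  refine (isBigO_tsum_pow_smul_sub_sum hq one_half_pos
    (summable_int_pow_mul one_half_pos one_half_lt_one (natAbs_le_two_mul_pronic_add_one hδ) k)
    (fun _ => norm_two_mul_add_pow_le hδ k) {0, -1} fun r hr => ?_).congr_left fun i => ?_
  · simp only [Finset.mem_insert, Finset.mem_singleton, not_or] at hr
    zify
    rw [natCast_pronic hδ]
    rcases (by omega : 1 ≤ r ∨ r ≤ -2) with h | h <;> nlinarith
  · norm_num [paritySum, pronic]

lemma isApprox_thetaSeries (hq : Tendsto q l (𝓝 0)) (θ : ι → ℝ) (k : ℕ) :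
    IsApprox l (fun i => q i ^ 4) (fun i => thetaSeries (q i) k (θ i))
      fun i => 0 ^ k + 2 * q i * (fourierMode k 1 (θ i)).re := by
  constructor
  · have hmode : (fun i => 2 * q i * (fourierMode k 1 (θ i)).re) =O[l] fun _ => (1 : ℝ) := by
      simpa using ((hq.const_mul 2).isBigO_one ℝ).mul (isBigO_one_re_fourierMode k 1 θ)
    exact (isBigO_const_const _ one_ne_zero l).add hmode
  · refine (isBigO_tsum_pow_smul_sub_sum hq one_half_pos
      (summable_int_pow_mul one_half_pos one_half_lt_one natAbs_le_natAbs_sq_add_one k)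
      (fun i n => abs_re_fourierMode_le k n (θ i)) {0, 1, -1} fun n hn => ?_).congr_left
      fun i => ?_
    · simp only [Finset.mem_insert, Finset.mem_singleton, not_or] at hn
      have : 2 ≤ n.natAbs := by omega
      nlinarith
    · simp [thetaSeries, re_fourierMode_freq_zero, fourierMode_freq_neg, two_mul, add_mul]

lemma isApprox_bilinearDet (hq : Tendsto q l (𝓝 0)) :
    IsApprox l (fun i => q i ^ 4) (fun i => bilinearDet (q i)) fun i => 2 - 12 * q i ^ 2 := by
  have he := isBigO_pow_four_one hq
  have h0 := isApprox_paritySum_zero hq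
  have h1 := isApprox_paritySum_one hq
  exact (((h0 0).mul he (h1 2)).sub ((h0 2).mul he (h1 0))).congr_right fun i => by ring

lemma tendsto_bilinearDet (hq : Tendsto q l (𝓝 0)) :
    Tendsto (fun i => bilinearDet (q i)) l (𝓝 2) := by
  refine (isApprox_bilinearDet hq).tendsto (tendsto_pow_four hq) ?_
  simpa using tendsto_const_nhds.sub ((hq.pow 2).const_mul 12)

lemma isApprox_bilinearAlpha (hq : Tendsto q l (𝓝 0)) :
    IsApprox l (fun i => q i ^ 4) (fun i => bilinearAlpha (q i)) fun i => 1 - 24 * q i ^ 2 := by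
  have he := isBigO_pow_four_one hq
  have h0 := isApprox_paritySum_zero hq
  have h1 := isApprox_paritySum_one hq
  have hnum := (((h0 0).mul he (h1 4)).sub ((h0 4).mul he (h1 0))).congr_right_add_mul
    (S := fun i => (1 - 24 * q i ^ 2) * (2 - 12 * q i ^ 2)) he
    (isBigO_const_const (-288) one_ne_zero l) fun i => by ring
  exact hnum.div (isApprox_bilinearDet hq) ((((hq.pow 2).const_mul 24).const_sub 1).isBigO_one ℝ)
    (tendsto_bilinearDet hq) two_ne_zero

lemma isApprox_bilinearBeta (hq : Tendsto q l (𝓝 0)) :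
    IsApprox l (fun i => q i ^ 4) (fun i => bilinearBeta (q i)) fun i => -24 * q i ^ 2 := by
  have he := isBigO_pow_four_one hq
  have h0 := isApprox_paritySum_zero hq
  have h1 := isApprox_paritySum_one hq
  have hnum := (((h0 2).mul he (h1 4)).sub ((h0 4).mul he (h1 2))).congr_right_add_mul
    (S := fun i => -24 * q i ^ 2 * (2 - 12 * q i ^ 2)) he
    (isBigO_const_const (-288) one_ne_zero l) fun i => by ring
  exact hnum.div (isApprox_bilinearDet hq) (((hq.pow 2).const_mul (-24)).isBigO_one ℝ)
    (tendsto_bilinearDet hq) two_ne_zero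

lemma isApprox_discriminant (hq : Tendsto q l (𝓝 0)) :
    IsApprox l (fun i => q i ^ 4) (fun i => bilinearAlpha (q i) ^ 2 - 12 * bilinearBeta (q i))
      fun i => (1 + 120 * q i ^ 2) ^ 2 := by
  have he := isBigO_pow_four_one hq
  exact (((isApprox_bilinearAlpha hq).pow he 2).sub
    ((isApprox_bilinearBeta hq).const_mul 12)).congr_right_add_mul he
    (isBigO_const_const (576 - 14400) one_ne_zero l) fun i => by ring

lemma isApprox_waveRoot (hq : Tendsto q l (𝓝 0)) :
    IsApprox l (fun i => q i ^ 4) (fun i => waveRoot (q i)) fun i => 1 + 120 * q i ^ 2 :=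
  (isApprox_discriminant hq).sqrt ((((hq.pow 2).const_mul 120).const_add 1).isBigO_one ℝ)
    fun i => by linarith [sq_nonneg (q i)]

lemma tendsto_theta (hq : Tendsto q l (𝓝 0)) (θ : ι → ℝ) :
    Tendsto (fun i => theta (q i) (θ i)) l (𝓝 1) := by
  refine (isApprox_thetaSeries hq θ 0).tendsto (tendsto_pow_four hq) ?_
  have hmode : (fun i => 2 * q i * (fourierMode 0 1 (θ i)).re) =O[l] q := by
    simpa using (isBigO_const_mul_self 2 q l).mul (isBigO_one_re_fourierMode 0 1 θ)
  simpa using (hmode.trans_tendsto hq).const_add 1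

lemma eventually_theta_ne_zero : ∀ᶠ q in 𝓝 (0 : ℝ), ∀ θ, theta q θ ≠ 0 := by
  have h := (tendsto_theta (l := 𝓝 (0 : ℝ) ×ˢ 𝓟 Set.univ) tendsto_fst Prod.snd).eventually_ne
    one_ne_zero
  simpa using eventually_prod_principal_iff.1 h

lemma eventually_abs_lt_one : ∀ᶠ q in 𝓝 (0 : ℝ), |q| < 1 :=
  (continuous_abs.tendsto' 0 0 abs_zero).eventually_lt_const one_pos

lemma eventually_isWaveProfile :
    ∀ᶠ q in 𝓝 (0 : ℝ), IsWaveProfile (2 * waveRoot q) (waveProfile q) := by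
  have hid : Tendsto id (𝓝 (0 : ℝ)) (𝓝 0) := tendsto_id
  have hdisc : Tendsto (fun q => bilinearAlpha q ^ 2 - 12 * bilinearBeta q) (𝓝 0) (𝓝 1) := by
    refine (isApprox_discriminant hid).tendsto (tendsto_pow_four hid) ?_
    simpa using (((hid.pow 2).const_mul 120).const_add 1).pow 2
  filter_upwards [eventually_abs_lt_one, (tendsto_bilinearDet hid).eventually_ne two_ne_zero,
    eventually_theta_ne_zero, hdisc.eventually_const_le one_pos] with q hq hdet htheta hrad
  exact isWaveProfile_waveProfile hq hdet htheta hrad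

lemma isApprox_theta_mul_sub_sq (hq : Tendsto q l (𝓝 0)) (θ : ι → ℝ) :
    IsApprox l (fun i => q i ^ 4)
      (fun i => thetaSeries (q i) 2 (θ i) * theta (q i) (θ i) - thetaSeries (q i) 1 (θ i) ^ 2)
      fun i => -2 * q i * Real.cos (θ i) - 4 * q i ^ 2 := by
  have he := isBigO_pow_four_one hq
  have hτ := isApprox_thetaSeries hq θ
  refine (((hτ 2).mul he (hτ 0)).sub ((hτ 1).pow he 2)).congr_right fun i => ?_
  rw [re_fourierMode_zero_one, re_fourierMode_one_one, re_fourierMode_two_one]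
  linear_combination -4 * q i ^ 2 * Real.sin_sq_add_cos_sq (θ i)

lemma deriv_logDeriv_theta {q : ℝ} (hq : |q| < 1) (htheta : ∀ θ, theta q θ ≠ 0) (θ : ℝ) :
    deriv (logDeriv (theta q)) θ
      = (thetaSeries q 2 θ * theta q θ - thetaSeries q 1 θ ^ 2) / theta q θ ^ 2 := by
  have := htheta θ
  rw [deriv_logDeriv (contDiff_theta hq) htheta, iteratedDeriv_theta hq, iteratedDeriv_theta hq]
  field_simp

/-- The terms of order at most three in the nome `q` of `(log τ)''` for `τ = theta q`, as a function
of `c = cos θ`. -/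
def logThetaJet (q c : ℝ) : ℝ :=
  -2 * q * c + 4 * q ^ 2 * (2 * c ^ 2 - 1) + q ^ 3 * (16 * c - 24 * c ^ 3)

lemma isApprox_deriv_logDeriv_theta (hq : Tendsto q l (𝓝 0)) (θ : ι → ℝ) :
    IsApprox l (fun i => q i ^ 4) (fun i => deriv (logDeriv (theta (q i))) (θ i))
      fun i => logThetaJet (q i) (Real.cos (θ i)) := by
  have he := isBigO_pow_four_one hq
  have hnum := (isApprox_theta_mul_sub_sq hq θ).congr_right_add_mul
    (S := fun i => logThetaJet (q i) (Real.cos (θ i)) * (1 + 2 * q i * Real.cos (θ i)) ^ 2) he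
    (isBigO_one_cos (F := fun p => 64 * p.2 ^ 4 - 48 * p.2 ^ 2
      + p.1 * (96 * p.2 ^ 5 - 64 * p.2 ^ 3)) hq θ (by fun_prop)) fun i => by
        rw [logThetaJet]
        ring
  have hden : IsApprox l (fun i => q i ^ 4) (fun i => theta (q i) (θ i) ^ 2)
      fun i => (1 + 2 * q i * Real.cos (θ i)) ^ 2 :=
    ((isApprox_thetaSeries hq θ 0).pow he 2).congr_right fun i => by
      rw [re_fourierMode_zero_one, pow_zero]
  have hjet : (fun i => logThetaJet (q i) (Real.cos (θ i))) =O[l] fun _ => (1 : ℝ) :=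
    isBigO_one_cos (F := fun p => logThetaJet p.1 p.2) hq θ (by unfold logThetaJet; fun_prop)
  refine (hnum.div hden hjet ((tendsto_theta hq θ).pow 2) (by norm_num)).congr_left ?_
  filter_upwards [hq.eventually eventually_theta_ne_zero, hq.eventually eventually_abs_lt_one]
    with i hne hlt
  exact (deriv_logDeriv_theta hlt hne (θ i)).symm

lemma isApprox_waveProfile (hq : Tendsto q l (𝓝 0)) (θ : ι → ℝ) :
    IsApprox l (fun i => q i ^ 4) (fun i => waveProfile (q i) (θ i))
      fun i => 2 + 96 * q i ^ 2 + 12 * logThetaJet (q i) (Real.cos (θ i)) :=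
  (((isApprox_bilinearAlpha hq).add (isApprox_waveRoot hq)).add
    ((isApprox_deriv_logDeriv_theta hq θ).const_mul 12)).congr_right fun i => by ring

/-! ### The waves of given amplitude -/

/-- The nome, up to `O(a⁵)`, for which the first Fourier coefficient `-24 (q + q³) + O(q⁵)` of the
profile is `a`. -/
def nome (a : ℝ) : ℝ := -(a / 24 - (a / 24) ^ 3)

variable {a : ι → ℝ}

lemma tendsto_nome (ha : Tendsto a l (𝓝 0)) : Tendsto (fun i => nome (a i)) l (𝓝 0) := by
  have hcont : Continuous nome := by unfold nome; fun_prop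
  exact (hcont.tendsto' 0 0 (by simp [nome])).comp ha

lemma isBigO_nome_pow_four (ha : Tendsto a l (𝓝 0)) :
    (fun i => nome (a i) ^ 4) =O[l] fun i => a i ^ 4 := by
  have hfactor : (fun i => a i * (-(1 / 24) + a i ^ 2 / 24 ^ 3)) =O[l] a := by
    simpa using (isBigO_refl a l).mul ((((ha.pow 2).div_const (24 ^ 3)).const_add _).isBigO_one ℝ)
  exact (hfactor.pow 4).congr_left fun i => by rw [nome]; ring

lemma isApprox_waveProfile_nome (ha : Tendsto a l (𝓝 0)) (θ : ι → ℝ) :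
    IsApprox l (fun i => a i ^ 4) (fun i => waveProfile (nome (a i)) (θ i))
      fun i => 2 + a i * Real.cos (θ i) + a i ^ 2 / 6 * (1 + 1 / 2 * Real.cos (2 * θ i))
        + a i ^ 3 / 192 * Real.cos (3 * θ i) := by
  refine ((isApprox_waveProfile (tendsto_nome ha) θ).trans_isBigO
    (isBigO_nome_pow_four ha)).congr_right_add_mul (isBigO_pow_four_one ha)
    (isBigO_one_cos (F := fun p => (48 * ((p.1 / 24) ^ 2 - 2) * (1 + 2 * p.2 ^ 2)
      - (p.1 / 24 * (3 - 3 * (p.1 / 24) ^ 2 + (p.1 / 24) ^ 4)) * (288 * p.2 ^ 3 - 192 * p.2))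
      / 24 ^ 4) ha θ (by fun_prop)) fun i => ?_
  rw [logThetaJet, nome, Real.cos_two_mul, Real.cos_three_mul]
  ring

lemma isApprox_waveRoot_nome (ha : Tendsto a l (𝓝 0)) :
    IsApprox l (fun i => a i ^ 4) (fun i => 2 * waveRoot (nome (a i)))
      fun i => 2 + 5 / 12 * a i ^ 2 := by
  refine (((isApprox_waveRoot (tendsto_nome ha)).const_mul 2).trans_isBigO
    (isBigO_nome_pow_four ha)).congr_right_add_mul (isBigO_pow_four_one ha)
    ((((ha.div_const 24).pow 2).sub_const 2 |>.const_mul (240 / 24 ^ 4)).isBigO_one ℝ) fun i => ?_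
  rw [nome]
  ring

end Expansion

lemma exists_eventually_abs_waveProfile_nome_sub_le :
    ∃ C > (0 : ℝ), ∀ᶠ a in 𝓝 (0 : ℝ), ∀ θ,
      |waveProfile (nome a) θ - (2 + a * Real.cos θ + a ^ 2 / 6 * (1 + 1 / 2 * Real.cos (2 * θ))
        + a ^ 3 / 192 * Real.cos (3 * θ))| ≤ C * a ^ 4 := by
  obtain ⟨C, hC, hbound⟩ := (isApprox_waveProfile_nome (l := 𝓝 (0 : ℝ) ×ˢ 𝓟 Set.univ)
    tendsto_fst Prod.snd).isBigO_sub.exists_pos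
  refine ⟨C, hC, (eventually_prod_principal_iff.1 hbound.bound).mono fun a ha θ => ?_⟩
  simpa [Even.pow_abs (by decide : Even 4)] using ha θ (Set.mem_univ θ)

lemma exists_eventually_abs_waveRoot_nome_sub_le :
    ∃ C > (0 : ℝ), ∀ᶠ a in 𝓝 (0 : ℝ),
      |2 * waveRoot (nome a) - (2 + 5 / 12 * a ^ 2)| ≤ C * a ^ 4 := by
  obtain ⟨C, hC, hbound⟩ := (isApprox_waveRoot_nome (a := id) tendsto_id).isBigO_sub.exists_pos
  exact ⟨C, hC, hbound.bound.mono fun a ha => by simpa [Even.pow_abs (by decide : Even 4)] using ha⟩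

/-! ### Plane waves -/

/-- The plane wave with profile `g` and integer wave vector `(m, n)`. -/
def planeWave (g : ℝ → ℝ) (m n : ℤ) (x y : ℝ) : ℝ := g (m * x + n * y)

section PlaneWave

variable {g : ℝ → ℝ} {c : ℝ}

lemma smooth2_planeWave (hg : ContDiff ℝ ∞ g) (m n : ℤ) : Smooth2 (planeWave g m n) := by
  unfold Smooth2 planeWave
  fun_prop

lemma dblPeriodic_planeWave (hg : Function.Periodic g (2 * π)) (m n : ℤ) :
    DblPeriodic (planeWave g m n) := fun x y => by
  constructor
  · rw [planeWave, planeWave, mul_add, add_right_comm, hg.int_mul m]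
  · rw [planeWave, planeWave, mul_add, ← add_assoc, hg.int_mul n]

lemma evenFun2_planeWave (hg : Function.Even g) (m n : ℤ) : EvenFun2 (planeWave g m n) :=
  fun x y => by rw [planeWave, planeWave, mul_neg, mul_neg, ← neg_add, hg]

lemma deriv_comp_mul_add (f : ℝ → ℝ) (k b : ℝ) :
    deriv (fun t => f (k * t + b)) = fun t => k * deriv f (k * t + b) := by
  ext t
  rw [deriv_comp_mul_left k (fun s => f (s + b)) t, deriv_comp_add_const, smul_eq_mul]

lemma deriv_deriv_comp_mul_add (f : ℝ → ℝ) (k b t : ℝ) :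
    deriv (deriv fun s => f (k * s + b)) t = k ^ 2 * deriv (deriv f) (k * t + b) := by
  rw [deriv_comp_mul_add, deriv_const_mul_field, deriv_comp_mul_add, sq, mul_assoc]

lemma lap_planeWave (g : ℝ → ℝ) (m n : ℤ) (x y : ℝ) :
    lap (planeWave g m n) x y = (m ^ 2 + n ^ 2) * planeWave (deriv (deriv g)) m n x y := by
  have hx := deriv_deriv_comp_mul_add g m (n * y) x
  have hy := deriv_deriv_comp_mul_add g n (m * x) y
  simp only [add_comm _ ((m : ℝ) * x)] at hy
  rw [add_mul]
  exact congrArg₂ (· + ·) hx hy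

lemma IsWaveProfile.planeWave_eq (hg : IsWaveProfile c g) {m n : ℤ} (hmn : m ^ 2 + n ^ 2 = 2)
    (x y : ℝ) :
    -(lap (planeWave g m n) x y) + c * planeWave g m n x y = planeWave g m n x y ^ 2 := by
  have hmn' : (m ^ 2 + n ^ 2 : ℝ) = 2 := by exact_mod_cast hmn
  rw [lap_planeWave, hmn']
  exact hg.ode _

end PlaneWave

/-- Existence of two small-amplitude branches of even doubly periodic waves for p = 1,
with expansions in cos(x±y) and common frequency c = 2 + (5/12)a² + O(a⁴). -/
theorem small_amplitude_even_waves_p_one :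
    ∃ a₀ > (0:ℝ), ∃ C > (0:ℝ), ∀ a ∈ Set.Ioo (0:ℝ) a₀,
      ∃ (c : ℝ) (φp φm : ℝ → ℝ → ℝ),
        Smooth2 φp ∧ DblPeriodic φp ∧ EvenFun2 φp ∧
        Smooth2 φm ∧ DblPeriodic φm ∧ EvenFun2 φm ∧
        (∀ x y : ℝ, -(lap φp x y) + c * φp x y = (φp x y)^2) ∧
        (∀ x y : ℝ, -(lap φm x y) + c * φm x y = (φm x y)^2) ∧
        (∀ x y : ℝ,
          |φp x y - (2 + a * Real.cos (x + y)
            + (a^2/6) * (1 + (1/2) * Real.cos (2*x + 2*y))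
            + (a^3/192) * Real.cos (3*x + 3*y))| ≤ C * a^4) ∧
        (∀ x y : ℝ,
          |φm x y - (2 + a * Real.cos (x - y)
            + (a^2/6) * (1 + (1/2) * Real.cos (2*x - 2*y))
            + (a^3/192) * Real.cos (3*x - 3*y))| ≤ C * a^4) ∧
        |c - (2 + (5/12) * a^2)| ≤ C * a^4 := by
  obtain ⟨C₁, hC₁, hprofile⟩ := exists_eventually_abs_waveProfile_nome_sub_le
  obtain ⟨C₂, hC₂, hfreq⟩ := exists_eventually_abs_waveRoot_nome_sub_le
  have hwave := (tendsto_nome tendsto_id).eventually eventually_isWaveProfile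
  obtain ⟨a₀, ha₀, hball⟩ := Metric.eventually_nhds_iff.1 ((hprofile.and hfreq).and hwave)
  refine ⟨a₀, ha₀, C₁ + C₂, add_pos hC₁ hC₂, fun a ⟨ha, haa₀⟩ => ?_⟩
  obtain ⟨⟨hprofile, hfreq⟩, hg⟩ := hball (by simpa [abs_of_pos ha] using haa₀ : dist a 0 < a₀)
  have hle₁ : C₁ * a ^ 4 ≤ (C₁ + C₂) * a ^ 4 := by gcongr; linarith
  have hle₂ : C₂ * a ^ 4 ≤ (C₁ + C₂) * a ^ 4 := by gcongr; linarith
  let g := waveProfile (nome a)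
  refine ⟨2 * waveRoot (nome a), planeWave g 1 1, planeWave g 1 (-1),
    smooth2_planeWave hg.contDiff 1 1, dblPeriodic_planeWave hg.periodic 1 1,
    evenFun2_planeWave hg.even 1 1, smooth2_planeWave hg.contDiff 1 (-1),
    dblPeriodic_planeWave hg.periodic 1 (-1), evenFun2_planeWave hg.even 1 (-1),
    hg.planeWave_eq (by norm_num), hg.planeWave_eq (by norm_num),
    fun x y => ?_, fun x y => ?_, hfreq.trans hle₂⟩
  · simpa [g, planeWave, mul_add] using (hprofile (x + y)).trans hle₁
  · simpa [g, planeWave, mul_sub, ← sub_eq_add_neg] using (hprofile (x - y)).trans hle₁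
end
end
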